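/- There exists a universal constant C > 0 such that for all L ≥ 90 and all integers ℓ with 1 ≤ ℓ ≤ n, the selected estimator ŝ = ŝ(L, ℓ) satisfies: for all ξ > 0, P[ C · H²(s 1_A, ŝ) ≥ inf_{m ∈ 𝓜_ℓ} ( H²(s 1_A, ŝ_m) + pen(m) ) + ξ ] ≤ 3 e^{−nξ}. -/

import Mathlib

/-!
The proof compares every dyadic histogram with every other one on a single event of
probability at least `1 - exp (-nξ)`.

Deviations. For a cube `K` and two candidate values `v, v'`, put `c = (√v' - √v) / √(v + v')`.
Since `X` is a Markov chain, the exponential of the number of transitions in `K` times `c / 12`,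
compensated by `exp (c / 12) - 1` times the conditional mass of `K`, is a nonnegative
supermartingale, and so is the product of such exponentials over disjoint cubes
(`supermartingale`). The values of a histogram on cubes of level at most `n` are ratios
`a * 2 ^ (j * d) / b` of integers at most `n`, so they range over a deterministic set of at most
`(n + 1) ^ 3` elements (`val_mem`, `card_valSet`). With a weight `n ^ (-8)` per cell, the sum of
the exponentials over all dyadic partitions and all pairs of values on their cells has expectation
at most one: the weight absorbs the number of values and leaves a factor `1 / 4` per cell, and
dyadic partitions are summable against it (`sum_parts_le`). Markov's inequality (`deviation`) then
controls the fluctuations for all partitions and all values at once, at the price of `8 log n`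
per cell (`fluct_bound`).

Comparison. A pointwise inequality between three square roots of densities (`key_real`) shows that
on one cube `α H² + T` is at most four times the Hellinger loss of the first value plus a multiple
of the logarithm of the exponential above (`local_bound`).

Gluing. The criterion `γ m` contains one supremum over competing partitions for each cell of `m`.
Inside a cell, a competitor acts as a dyadic partition of that cell (`localise`), and the chosen
partitions of the cells glue to one dyadic partition of the unit cube, on which the deviation bound
applies. The logarithmic term is absorbed by the penalty because `L ≥ 90`, so that
`γ m ≤ 4 H²(s 1_A, ŝ_m) + 8.5 ξ + 2 pen m` (`gammaSel_le`).

Conclusion. As `T` is antisymmetric, adding the comparison of `m` with `m'` to that of `m'` with `m`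
leaves `2 α H²(ŝ_m, ŝ_m')`, and `∑ K ∈ m, |m' ∨ K| ≤ |m| + |m'|` (`sum_veeCard_le`), so that
`2 α H²(ŝ_m, ŝ_m') ≤ γ m + γ m'` (`two_alpha_hellSq_le`). For `m'` the selected partition, whose
criterion exceeds `γ m` by at most `1 / n`, the relaxed triangle inequality gives the claim with
`C = 1 / 200` (`oracle_of_good`).
-/

open MeasureTheory Real
open scoped ENNReal
noncomputable section
open Classical

/-- Dyadic subinterval of `[0,1]`: `[l/2^j, (l+1)/2^j)`, closed on the right when
`l + 1 = 2^j`. -/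
def dyadicI (j l : ℕ) : Set ℝ :=
  if l + 1 = 2 ^ j then Set.Icc ((l : ℝ) / 2 ^ j) 1
  else Set.Ico ((l : ℝ) / 2 ^ j) (((l : ℝ) + 1) / 2 ^ j)

/-- A dyadic cube of `[0,1]^{2d}` is coded by its level and its multi-index. -/
abbrev CubeIdx (d : ℕ) := ℕ × (Fin (2 * d) → ℕ)

/-- The subset of `[0,1]^{2d}` coded by a cube index. -/
def cubeSet (d : ℕ) (K : CubeIdx d) : Set (Fin (2 * d) → ℝ) :=
  {x | ∀ i, x i ∈ dyadicI K.1 (K.2 i)}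

/-- The `4^d` dyadic children (of half side length) of a dyadic cube. -/
def childrenC (d : ℕ) (K : CubeIdx d) : Finset (CubeIdx d) :=
  (Finset.univ : Finset (Fin (2 * d) → Fin 2)).image
    (fun ε => (K.1 + 1, fun i => 2 * K.2 i + (ε i : ℕ)))

/-- `IsPartOf d ℓ K m` means: `m` is a partition of the dyadic cube `K` into dyadic
cubes, obtained by at most `ℓ` recursive splitting steps (at each step, each current
cube may be split into its `4^d` children). -/
inductive IsPartOf (d : ℕ) : ℕ → CubeIdx d → Finset (CubeIdx d) → Prop
  | leaf (ℓ : ℕ) (K : CubeIdx d) : IsPartOf d ℓ K {K}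
  | node (ℓ : ℕ) (K : CubeIdx d) (f : CubeIdx d → Finset (CubeIdx d))
      (h : ∀ K' ∈ childrenC d K, IsPartOf d ℓ K' (f K')) :
      IsPartOf d (ℓ + 1) K ((childrenC d K).biUnion f)

/-- The root cube, coding `[0,1]^{2d}`. -/
def rootC (d : ℕ) : CubeIdx d := (0, fun _ => 0)

/-- The collection `𝓜_ℓ` of dyadic partitions of `[0,1]^{2d}` built in at most `ℓ` steps. -/
def Mpart (d ℓ : ℕ) : Set (Finset (CubeIdx d)) := {m | IsPartOf d ℓ (rootC d) m}

/-- The collection `𝓜_∞ = ⋃_ℓ 𝓜_ℓ`. -/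
def MpartInf (d : ℕ) : Set (Finset (CubeIdx d)) := ⋃ ℓ, Mpart d ℓ

/-- The collection `𝓜_ℓ` for `ℓ ∈ ℕ ∪ {∞}`. -/
def MpartE (d : ℕ) (ℓ : ℕ∞) : Set (Finset (CubeIdx d)) :=
  if ℓ = ⊤ then MpartInf d else Mpart d ℓ.toNat

/-- Concatenation of two points of `ℝ^d` into a point of `ℝ^{2d}`. -/
def pairPt (d : ℕ) (x y : Fin d → ℝ) : Fin (2 * d) → ℝ :=
  fun i => if h : (i : ℕ) < d then x ⟨i, h⟩
    else y ⟨(i : ℕ) - d, by have := i.isLt; omega⟩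

/-- The indicator function `1_K` of a dyadic cube, as a function on `ℝ^d × ℝ^d`. -/
def indC (d : ℕ) (K : CubeIdx d) (p : (Fin d → ℝ) × (Fin d → ℝ)) : ℝ :=
  (cubeSet d K).indicator (fun _ => (1 : ℝ)) (pairPt d p.1 p.2)

/-- The set `A = [0,1]^d × [0,1]^d` on which the transition density is estimated. -/
def unitSq (d : ℕ) : Set ((Fin d → ℝ) × (Fin d → ℝ)) :=
  (Set.Icc (0 : Fin d → ℝ) 1) ×ˢ (Set.Icc (0 : Fin d → ℝ) 1)

/-- The empirical Hellinger-type squared distance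
`H²(f,f') = (1/(2n)) ∑_{i<n} ∫ (√f(X_i,y) - √f'(X_i,y))² dy`. -/
def hellSq (d : ℕ) {Ω : Type*} (n : ℕ) (X : ℕ → Ω → (Fin d → ℝ)) (ω : Ω)
    (f g : (Fin d → ℝ) × (Fin d → ℝ) → ℝ) : ℝ :=
  (1 / (2 * n)) * ∑ i ∈ Finset.range n,
    ∫ y, (Real.sqrt (f (X i ω, y)) - Real.sqrt (g (X i ω, y))) ^ 2

/-- The test statistic `T(f,f')` (conventions `0/0 = 0` are those of real division). -/
def Tstat (d : ℕ) {Ω : Type*} (n : ℕ) (X : ℕ → Ω → (Fin d → ℝ)) (ω : Ω)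
    (f g : (Fin d → ℝ) × (Fin d → ℝ) → ℝ) : ℝ :=
  (1 / (2 * Real.sqrt 2 * n)) * (∑ i ∈ Finset.range n,
      ∫ y, Real.sqrt (f (X i ω, y) + g (X i ω, y)) *
        (Real.sqrt (g (X i ω, y)) - Real.sqrt (f (X i ω, y))))
  + (1 / (Real.sqrt 2 * n)) * (∑ i ∈ Finset.range n,
      (Real.sqrt (g (X i ω, X (i + 1) ω)) - Real.sqrt (f (X i ω, X (i + 1) ω))) /
        Real.sqrt (f (X i ω, X (i + 1) ω) + g (X i ω, X (i + 1) ω)))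
  + (1 / (2 * n)) * (∑ i ∈ Finset.range n,
      ∫ y, (f (X i ω, y) - g (X i ω, y)))

/-- The histogram estimator `ŝ_m` on a dyadic partition `m` (convention `0/0 = 0`). -/
def histEst (d : ℕ) {Ω : Type*} (n : ℕ) (X : ℕ → Ω → (Fin d → ℝ))
    (m : Finset (CubeIdx d)) (ω : Ω) : (Fin d → ℝ) × (Fin d → ℝ) → ℝ :=
  fun p => ∑ K ∈ m,
    ((∑ i ∈ Finset.range n, indC d K (X i ω, X (i + 1) ω)) /
      (∑ i ∈ Finset.range n, ∫ y, indC d K (X i ω, y))) * indC d K p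

/-- The set `V_m` of nonnegative piecewise constant functions on a dyadic partition `m`. -/
def VmD (d : ℕ) (m : Finset (CubeIdx d)) : Set ((Fin d → ℝ) × (Fin d → ℝ) → ℝ) :=
  {g | ∃ a : CubeIdx d → ℝ, (∀ K ∈ m, 0 ≤ a K) ∧
    g = fun p => ∑ K ∈ m, a K * indC d K p}

/-- `|m' ∨ K|`: the number of nonempty pieces `K' ∩ K`, `K' ∈ m'`. -/
def veeCard (d : ℕ) (m' : Finset (CubeIdx d)) (K : CubeIdx d) : ℕ :=
  ((m'.filter fun K' => (cubeSet d K' ∩ cubeSet d K).Nonempty).image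
    fun K' => cubeSet d K' ∩ cubeSet d K).card

/-- The penalty `L ⬝ c ⬝ log n / n` attached to a cardinality `c`. -/
def penC (L : ℝ) (n : ℕ) (c : ℕ) : ℝ := L * c * Real.log n / n

/-- `α = (1 - 1/√2)/2`. -/
def alphaC : ℝ := (1 - 1 / Real.sqrt 2) / 2

/-- Restriction `f ⬝ 1_{K ∩ K'}`. -/
def restr2 (d : ℕ) (f : (Fin d → ℝ) × (Fin d → ℝ) → ℝ) (K K' : CubeIdx d) :
    (Fin d → ℝ) × (Fin d → ℝ) → ℝ :=
  fun p => f p * indC d K p * indC d K' p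

/-- Restriction `f ⬝ 1_K`. -/
def restr1 (d : ℕ) (f : (Fin d → ℝ) × (Fin d → ℝ) → ℝ) (K : CubeIdx d) :
    (Fin d → ℝ) × (Fin d → ℝ) → ℝ :=
  fun p => f p * indC d K p

/-- The selection criterion `γ`. -/
def gammaSel (d : ℕ) {Ω : Type*} (n : ℕ) (X : ℕ → Ω → (Fin d → ℝ)) (L : ℝ) (ℓ : ℕ∞)
    (ω : Ω) (m : Finset (CubeIdx d)) : ℝ :=
  (∑ K ∈ m, ⨆ m' : MpartE d ℓ,
      ((∑ K' ∈ (m' : Finset (CubeIdx d)),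
          (alphaC * hellSq d n X ω (restr2 d (histEst d n X m ω) K K')
                (restr2 d (histEst d n X (m' : Finset (CubeIdx d)) ω) K K')
            + Tstat d n X ω (restr2 d (histEst d n X m ω) K K')
                (restr2 d (histEst d n X (m' : Finset (CubeIdx d)) ω) K K')))
        - penC L n (veeCard d (m' : Finset (CubeIdx d)) K)))
  + 2 * penC L n m.card

/-- `s ⬝ 1_A`, the target function restricted to `A = [0,1]^{2d}`. -/
def sIndA (d : ℕ) (s : (Fin d → ℝ) → (Fin d → ℝ) → ℝ) :
    (Fin d → ℝ) × (Fin d → ℝ) → ℝ :=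
  (unitSq d).indicator fun p => s p.1 p.2

end

noncomputable section
open Classical

namespace DyadicSel

/-! ### Geometry of dyadic cubes -/

/-- Index at level `j` of the dyadic interval of `[0,1]` containing `t`; the minimum puts
`t = 1` into the last interval, which is closed on the right. -/
def idx (j : ℕ) (t : ℝ) : ℕ := min ⌊2 ^ j * t⌋₊ (2 ^ j - 1)

/-- Indices of genuine cubes of `[0,1]^{2d}`. -/
def Valid {d : ℕ} (K : CubeIdx d) : Prop := ∀ i, K.2 i < 2 ^ K.1

lemma mem_dyadicI {j l : ℕ} (hl : l < 2 ^ j) (t : ℝ) :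
    t ∈ dyadicI j l ↔ 0 ≤ t ∧ t ≤ 1 ∧ idx j t = l := by
  have h2 : (0 : ℝ) < 2 ^ j := by positivity
  have hl' : (l : ℝ) + 1 ≤ 2 ^ j := by exact_mod_cast hl
  unfold dyadicI idx
  split_ifs with h
  · have h' : (l : ℝ) + 1 = 2 ^ j := by exact_mod_cast h
    rw [Set.mem_Icc, div_le_iff₀ h2]
    constructor
    · rintro ⟨ha, hb⟩
      have h0 : 0 ≤ t := by
        by_contra hc
        push Not at hc
        have : t * 2 ^ j < 0 := mul_neg_of_neg_of_pos hc h2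
        have : (0 : ℝ) ≤ l := l.cast_nonneg
        linarith
      refine ⟨h0, hb, ?_⟩
      have : l ≤ ⌊2 ^ j * t⌋₊ := Nat.le_floor (by linarith)
      omega
    · rintro ⟨h0, h1, h3⟩
      refine ⟨?_, h1⟩
      have : l ≤ ⌊2 ^ j * t⌋₊ := by omega
      have := (Nat.le_floor_iff (by positivity)).1 this
      linarith
  · rw [Set.mem_Ico, div_le_iff₀ h2, lt_div_iff₀ h2]
    have hl2 : l + 1 < 2 ^ j := lt_of_le_of_ne hl h
    constructor
    · rintro ⟨ha, hb⟩
      have h0 : 0 ≤ t := by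
        by_contra hc
        push Not at hc
        have : t * 2 ^ j < 0 := mul_neg_of_neg_of_pos hc h2
        have : (0 : ℝ) ≤ l := l.cast_nonneg
        linarith
      refine ⟨h0, ?_, ?_⟩
      · by_contra hc
        push Not at hc
        nlinarith
      · have : ⌊2 ^ j * t⌋₊ = l := (Nat.floor_eq_iff (by positivity)).2 ⟨by linarith, by linarith⟩
        omega
    · rintro ⟨h0, h1, h3⟩
      have : ⌊2 ^ j * t⌋₊ = l := by omega
      have := (Nat.floor_eq_iff (by positivity)).1 this
      constructor <;> linarith [this.1, this.2]

lemma idx_lt (j : ℕ) (t : ℝ) : idx j t < 2 ^ j := by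
  have : 0 < 2 ^ j := by positivity
  unfold idx; omega

lemma idx_half (j : ℕ) (t : ℝ) : idx j t = idx (j + 1) t / 2 := by
  have h : ⌊2 ^ j * t⌋₊ = ⌊2 ^ (j + 1) * t⌋₊ / 2 := by
    rw [← Nat.floor_div_ofNat]
    congr 1
    ring
  have h2 : 2 ^ (j + 1) = 2 * 2 ^ j := by ring
  have h3 : 0 < 2 ^ j := by positivity
  unfold idx
  rw [h]
  omega

lemma idx_coarse (j k : ℕ) (t : ℝ) : idx j t = idx (j + k) t / 2 ^ k := by
  induction k with
  | zero => simp
  | succ k ih => rw [ih, idx_half (j + k) t, Nat.div_div_eq_div_mul, ← pow_succ']; rfl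

variable {d : ℕ}

lemma mem_cubeSet {K : CubeIdx d} (hK : Valid K) (z : Fin (2 * d) → ℝ) :
    z ∈ cubeSet d K ↔ ∀ i, 0 ≤ z i ∧ z i ≤ 1 ∧ idx K.1 (z i) = K.2 i := by
  unfold cubeSet
  simp only [Set.mem_ofPred_eq]
  exact forall_congr' fun i => mem_dyadicI (hK i) _

/-- Two dyadic cubes that meet are nested. -/
lemma nested {K K' : CubeIdx d} (hK : Valid K) (hK' : Valid K') {z : Fin (2 * d) → ℝ}
    (hz : z ∈ cubeSet d K) (hz' : z ∈ cubeSet d K') (h : K.1 ≤ K'.1) :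
    cubeSet d K' ⊆ cubeSet d K := by
  intro w hw
  rw [mem_cubeSet hK] at *
  rw [mem_cubeSet hK'] at *
  intro i
  refine ⟨(hw i).1, (hw i).2.1, ?_⟩
  obtain ⟨k, hk⟩ := Nat.exists_eq_add_of_le h
  rw [← (hz i).2.2, idx_coarse K.1 k, idx_coarse K.1 k (z i), ← hk, (hw i).2.2, (hz' i).2.2]

lemma eq_of_meet {K K' : CubeIdx d} (hK : Valid K) (hK' : Valid K') {z : Fin (2 * d) → ℝ}
    (hz : z ∈ cubeSet d K) (hz' : z ∈ cubeSet d K') (h : K.1 = K'.1) : K = K' := by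
  rw [mem_cubeSet hK] at hz
  rw [mem_cubeSet hK'] at hz'
  refine Prod.ext h (funext fun i => ?_)
  rw [← (hz i).2.2, ← (hz' i).2.2, h]

lemma cube_nonempty {K : CubeIdx d} (hK : Valid K) : (cubeSet d K).Nonempty := by
  refine ⟨fun i => (K.2 i : ℝ) / 2 ^ K.1, ?_⟩
  rw [mem_cubeSet hK]
  intro i
  have h2 : (0 : ℝ) < 2 ^ K.1 := by positivity
  have hl : (K.2 i : ℝ) + 1 ≤ 2 ^ K.1 := by exact_mod_cast hK i
  refine ⟨by positivity, by rw [div_le_one h2]; linarith, ?_⟩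
  unfold idx
  rw [mul_div_cancel₀ _ h2.ne', Nat.floor_natCast]
  have := hK i
  omega

lemma mem_children {K c : CubeIdx d} :
    c ∈ childrenC d K ↔ ∃ ε : Fin (2 * d) → Fin 2,
      (K.1 + 1, fun i => 2 * K.2 i + (ε i : ℕ)) = c := by
  simp [childrenC]

lemma child_level {K c : CubeIdx d} (hc : c ∈ childrenC d K) : c.1 = K.1 + 1 := by
  obtain ⟨ε, rfl⟩ := mem_children.1 hc
  rfl

lemma child_valid {K c : CubeIdx d} (hK : Valid K) (hc : c ∈ childrenC d K) : Valid c := by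
  obtain ⟨ε, rfl⟩ := mem_children.1 hc
  intro i
  have h1 := hK i
  have h2 := (ε i).isLt
  have h3 : 2 ^ (K.1 + 1) = 2 * 2 ^ K.1 := by ring
  simp only
  omega

lemma child_subset {K c : CubeIdx d} (hK : Valid K) (hc : c ∈ childrenC d K) :
    cubeSet d c ⊆ cubeSet d K := by
  intro z hz
  have hv := child_valid hK hc
  rw [mem_cubeSet hv] at hz
  rw [mem_cubeSet hK]
  obtain ⟨ε, rfl⟩ := mem_children.1 hc
  intro i
  refine ⟨(hz i).1, (hz i).2.1, ?_⟩
  have h2 := (ε i).isLt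
  have := (hz i).2.2
  simp only at this
  rw [idx_half, this]
  omega

lemma exists_child {K : CubeIdx d} (hK : Valid K) {z : Fin (2 * d) → ℝ}
    (hz : z ∈ cubeSet d K) : ∃ c ∈ childrenC d K, z ∈ cubeSet d c := by
  have hc : ((K.1 + 1, fun i => 2 * K.2 i + idx (K.1 + 1) (z i) % 2) : CubeIdx d)
      ∈ childrenC d K :=
    mem_children.2 ⟨fun i => ⟨idx (K.1 + 1) (z i) % 2, Nat.mod_lt _ (by norm_num)⟩, rfl⟩
  refine ⟨_, hc, ?_⟩
  rw [mem_cubeSet (child_valid hK hc)]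
  rw [mem_cubeSet hK] at hz
  intro i
  refine ⟨(hz i).1, (hz i).2.1, ?_⟩
  have := (hz i).2.2
  rw [idx_half] at this
  simp only
  omega

lemma root_valid : Valid (rootC d) := by
  intro i; simp [rootC]

lemma mem_root (z : Fin (2 * d) → ℝ) :
    z ∈ cubeSet d (rootC d) ↔ ∀ i, 0 ≤ z i ∧ z i ≤ 1 := by
  rw [mem_cubeSet root_valid]
  refine forall_congr' fun i => ?_
  have : idx 0 (z i) = 0 := by
    have := idx_lt 0 (z i)
    simpa using this
  simp [rootC, this]

/-! ### Gluing, restricting and counting dyadic partitions -/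

/-- What is used of a dyadic partition of `K`: valid subcubes, covering `K`, pairwise
disjoint. -/
structure PartProps (ℓ : ℕ) (K : CubeIdx d) (m : Finset (CubeIdx d)) : Prop where
  valid : ∀ c ∈ m, Valid c
  sub : ∀ c ∈ m, cubeSet d c ⊆ cubeSet d K
  le : ∀ c ∈ m, K.1 ≤ c.1
  ge : ∀ c ∈ m, c.1 ≤ K.1 + ℓ
  cover : ∀ z ∈ cubeSet d K, ∃ c ∈ m, z ∈ cubeSet d c
  disj : ∀ c ∈ m, ∀ c' ∈ m, ∀ z, z ∈ cubeSet d c → z ∈ cubeSet d c' → c = c'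

lemma IsPartOf.props {ℓ : ℕ} {K : CubeIdx d} {m : Finset (CubeIdx d)}
    (h : IsPartOf d ℓ K m) : Valid K → PartProps ℓ K m := by
  induction h with
  | leaf ℓ K =>
    intro hK
    constructor <;> simp [hK]
  | node ℓ K f h ih =>
    intro hK
    have ih' := fun c hc => ih c hc (child_valid hK hc)
    constructor
    · intro c hc
      obtain ⟨a, ha, hca⟩ := Finset.mem_biUnion.1 hc
      exact (ih' a ha).valid c hca
    · intro c hc
      obtain ⟨a, ha, hca⟩ := Finset.mem_biUnion.1 hc
      exact ((ih' a ha).sub c hca).trans (child_subset hK ha)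
    · intro c hc
      obtain ⟨a, ha, hca⟩ := Finset.mem_biUnion.1 hc
      have := (ih' a ha).le c hca
      have := child_level ha
      omega
    · intro c hc
      obtain ⟨a, ha, hca⟩ := Finset.mem_biUnion.1 hc
      have := (ih' a ha).ge c hca
      have := child_level ha
      omega
    · intro z hz
      obtain ⟨a, ha, hza⟩ := exists_child hK hz
      obtain ⟨c, hc, hzc⟩ := (ih' a ha).cover z hza
      exact ⟨c, Finset.mem_biUnion.2 ⟨a, ha, hc⟩, hzc⟩
    · intro c hc c' hc' z hz hz'
      obtain ⟨a, ha, hca⟩ := Finset.mem_biUnion.1 hc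
      obtain ⟨a', ha', hca'⟩ := Finset.mem_biUnion.1 hc'
      have : a = a' := eq_of_meet (child_valid hK ha) (child_valid hK ha')
        ((ih' a ha).sub c hca hz) ((ih' a' ha').sub c' hca' hz')
        (by rw [child_level ha, child_level ha'])
      subst this
      exact (ih' a ha).disj c hca c' hca' z hz hz'

/-- Refining each cell of a dyadic partition by a dyadic partition of that cell, within the
remaining depth, gives a dyadic partition. -/
lemma IsPartOf.glue {ℓ : ℕ} {R : CubeIdx d} {m : Finset (CubeIdx d)} (h : IsPartOf d ℓ R m)
    (g : CubeIdx d → Finset (CubeIdx d)) :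
    (∀ K ∈ m, IsPartOf d (ℓ + R.1 - K.1) K (g K)) → IsPartOf d ℓ R (m.biUnion g) := by
  induction h with
  | leaf ℓ K =>
    intro hg
    have := hg K (by simp)
    simpa using this
  | node ℓ K f h ih =>
    intro hg
    rw [Finset.biUnion_biUnion]
    refine IsPartOf.node ℓ K (fun c => (f c).biUnion g) fun c hc => ih c hc fun K' hK' => ?_
    have := hg K' (Finset.mem_biUnion.2 ⟨c, hc, hK'⟩)
    rw [child_level hc]
    rwa [show ℓ + (K.1 + 1) - K'.1 = ℓ + 1 + K.1 - K'.1 by omega]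

/-- If every cell of `m` meeting the cube `K` is at least as fine as `K`, then these cells form
a dyadic partition of `K`. -/
lemma IsPartOf.restrict {ℓ : ℕ} {R : CubeIdx d} {m : Finset (CubeIdx d)}
    (h : IsPartOf d ℓ R m) {K : CubeIdx d} (hK : Valid K) :
    Valid R → R.1 ≤ K.1 → cubeSet d K ⊆ cubeSet d R →
    (∀ K' ∈ m, (cubeSet d K' ∩ cubeSet d K).Nonempty → K.1 ≤ K'.1) →
    IsPartOf d (ℓ + R.1 - K.1) K
      (m.filter fun K' => (cubeSet d K' ∩ cubeSet d K).Nonempty) := by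
  induction h with
  | leaf ℓ R =>
    intro hR hle hsub hfine
    obtain ⟨z, hz⟩ := cube_nonempty hK
    have hne : (cubeSet d R ∩ cubeSet d K).Nonempty := ⟨z, hsub hz, hz⟩
    have h1 := hfine R (by simp) hne
    obtain rfl : R = K := eq_of_meet hR hK (hsub hz) hz (le_antisymm hle h1)
    rw [Finset.filter_singleton, if_pos hne]
    exact IsPartOf.leaf _ _
  | node ℓ R f hf ih =>
    intro hR hle hsub hfine
    obtain ⟨z, hz⟩ := cube_nonempty hK
    rcases hle.eq_or_lt with heq | hlt
    · obtain rfl : R = K := eq_of_meet hR hK (hsub hz) hz heq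
      have hp := IsPartOf.props (IsPartOf.node ℓ R f hf) hR
      rw [Finset.filter_true_of_mem, Nat.add_sub_cancel]
      · exact IsPartOf.node ℓ R f hf
      · intro c hc
        obtain ⟨w, hw⟩ := cube_nonempty (hp.valid c hc)
        exact ⟨w, hw, hp.sub c hc hw⟩
    · obtain ⟨c, hc, hzc⟩ := exists_child hR (hsub hz)
      have hcv := child_valid hR hc
      have hcK : cubeSet d K ⊆ cubeSet d c := nested hcv hK hzc hz (by
        rw [child_level hc]; omega)
      have key := ih c hc hcv (by rw [child_level hc]; omega) hcK
        (fun K' hK' => hfine K' (Finset.mem_biUnion.2 ⟨c, hc, hK'⟩))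
      rw [child_level hc, show ℓ + (R.1 + 1) - K.1 = ℓ + 1 + R.1 - K.1 by omega] at key
      convert key using 1
      ext K'
      simp only [Finset.mem_filter, Finset.mem_biUnion]
      constructor
      · rintro ⟨⟨a, ha, hK'⟩, w, hw1, hw2⟩
        have hav := child_valid hR ha
        have : a = c := eq_of_meet hav hcv
          (((IsPartOf.props (hf a ha) hav).sub K' hK') hw1) (hcK hw2)
          (by rw [child_level ha, child_level hc])
        subst this
        exact ⟨hK', w, hw1, hw2⟩
      · rintro ⟨h1, h2⟩
        exact ⟨⟨c, hc, h1⟩, h2⟩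

lemma card_children (hd : 0 < d) (K : CubeIdx d) : 2 ≤ (childrenC d K).card := by
  unfold childrenC
  rw [Finset.card_image_of_injective]
  · simp only [Finset.card_univ, Fintype.card_pi, Fintype.card_fin, Finset.prod_const]
    calc 2 = 2 ^ 1 := by norm_num
      _ ≤ 2 ^ (2 * d) := Nat.pow_le_pow_right (by norm_num) (by omega)
  · intro ε ε' h
    funext i
    have := congrFun (congrArg Prod.snd h) i
    simp only at this
    exact Fin.ext (by omega)

/-- The finite set of all dyadic partitions of `K` of depth at most `ℓ`. -/
def parts (d : ℕ) : ℕ → CubeIdx d → Finset (Finset (CubeIdx d))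
  | 0, K => {{K}}
  | ℓ + 1, K => {{K}} ∪ ((childrenC d K).pi (parts d ℓ)).image
      fun p => (childrenC d K).attach.biUnion fun c => p c.1 c.2

lemma mem_parts_of {ℓ : ℕ} {K : CubeIdx d} {m : Finset (CubeIdx d)} (h : IsPartOf d ℓ K m) :
    m ∈ parts d ℓ K := by
  induction h with
  | leaf ℓ K => cases ℓ <;> simp [parts]
  | node ℓ K f h ih =>
    rw [parts, Finset.mem_union]
    right
    rw [Finset.mem_image]
    refine ⟨fun c _ => f c, Finset.mem_pi.2 fun c hc => ih c hc, ?_⟩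
    ext x
    simp

lemma isPart_of_mem {ℓ : ℕ} : ∀ {K : CubeIdx d} {m : Finset (CubeIdx d)}, m ∈ parts d ℓ K →
    IsPartOf d ℓ K m := by
  induction ℓ with
  | zero =>
    intro K m h
    rw [parts, Finset.mem_singleton] at h
    subst h
    exact IsPartOf.leaf _ _
  | succ ℓ ih =>
    intro K m h
    rw [parts, Finset.mem_union, Finset.mem_singleton, Finset.mem_image] at h
    rcases h with rfl | ⟨p, hp, rfl⟩
    · exact IsPartOf.leaf _ _
    · have := IsPartOf.node ℓ K (fun c => if hc : c ∈ childrenC d K then p c hc else ∅)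
        (fun c hc => by
          simp only [hc, dif_pos]
          exact ih (Finset.mem_pi.1 hp c hc))
      convert this using 1
      ext x
      simp only [Finset.mem_biUnion, Finset.mem_attach, true_and, Subtype.exists]
      constructor
      · rintro ⟨c, hc, hx⟩
        exact ⟨c, hc, by simpa [hc] using hx⟩
      · rintro ⟨c, hc, hx⟩
        exact ⟨c, hc, by simpa [hc] using hx⟩

/-- Kraft-type bound: a weight `1/4` per cell makes the family of dyadic partitions summable. A
cube contributes `1 / 4` as a leaf, and at most `(1 / 2) ^ 2` when it is split, because it has at
least two children. -/
lemma sum_parts_le (hd : 0 < d) (ℓ : ℕ) : ∀ K : CubeIdx d, Valid K →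
    ∑ m ∈ parts d ℓ K, (1 / 4 : ℝ) ^ m.card ≤ 1 / 2 := by
  induction ℓ with
  | zero => intro K _; rw [parts]; norm_num
  | succ ℓ ih =>
    intro K hK
    rw [parts]
    have h1 : ∑ m ∈ ((childrenC d K).pi (parts d ℓ)).image
        (fun p => (childrenC d K).attach.biUnion fun c => p c.1 c.2), (1 / 4 : ℝ) ^ m.card
        ≤ 1 / 4 := by
      calc _ ≤ ∑ p ∈ (childrenC d K).pi (parts d ℓ),
            (1 / 4 : ℝ) ^ ((childrenC d K).attach.biUnion fun c => p c.1 c.2).card :=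
            Finset.sum_image_le_of_nonneg (f := fun m : Finset (CubeIdx d) => (1 / 4 : ℝ) ^ m.card)
              (fun _ _ => by positivity)
        _ = ∑ p ∈ (childrenC d K).pi (parts d ℓ),
            ∏ c ∈ (childrenC d K).attach, (1 / 4 : ℝ) ^ (p c.1 c.2).card := by
            refine Finset.sum_congr rfl fun p hp => ?_
            rw [Finset.card_biUnion, Finset.prod_pow_eq_pow_sum]
            intro a _ b _ hab
            rw [Function.onFun, Finset.disjoint_left]
            intro x hxa hxb
            have pa := IsPartOf.props (isPart_of_mem (Finset.mem_pi.1 hp a.1 a.2))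
              (child_valid hK a.2)
            have pb := IsPartOf.props (isPart_of_mem (Finset.mem_pi.1 hp b.1 b.2))
              (child_valid hK b.2)
            obtain ⟨z, hz⟩ := cube_nonempty (pa.valid x hxa)
            exact hab (Subtype.ext (eq_of_meet (child_valid hK a.2) (child_valid hK b.2)
              (pa.sub x hxa hz) (pb.sub x hxb hz) (by rw [child_level a.2, child_level b.2])))
        _ = ∏ c ∈ childrenC d K, ∑ m ∈ parts d ℓ c, (1 / 4 : ℝ) ^ m.card :=
            (Finset.prod_sum (childrenC d K) (parts d ℓ)
              (fun _ m => (1 / 4 : ℝ) ^ m.card)).symm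
        _ ≤ ∏ _c ∈ childrenC d K, (1 / 2 : ℝ) :=
            Finset.prod_le_prod (fun _ _ => Finset.sum_nonneg fun _ _ => by positivity)
              (fun c hc => ih c (child_valid hK hc))
        _ = (1 / 2 : ℝ) ^ (childrenC d K).card := by rw [Finset.prod_const]
        _ ≤ (1 / 2 : ℝ) ^ 2 :=
            pow_le_pow_of_le_one (by norm_num) (by norm_num) (card_children hd K)
        _ = 1 / 4 := by norm_num
    have h2 := Finset.sum_union_inter (s₁ := ({{K}} : Finset (Finset (CubeIdx d))))
      (s₂ := ((childrenC d K).pi (parts d ℓ)).image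
        (fun p => (childrenC d K).attach.biUnion fun c => p c.1 c.2))
      (f := fun m => (1 / 4 : ℝ) ^ m.card)
    have h3 : 0 ≤ ∑ m ∈ ({{K}} : Finset (Finset (CubeIdx d))) ∩
        ((childrenC d K).pi (parts d ℓ)).image
        (fun p => (childrenC d K).attach.biUnion fun c => p c.1 c.2), (1 / 4 : ℝ) ^ m.card :=
      Finset.sum_nonneg fun _ _ => by positivity
    simp only [Finset.sum_singleton, Finset.card_singleton, pow_one] at h2
    linarith

end DyadicSel
end

noncomputable section
open Classical

namespace DyadicSel

/-! ### Elementary inequalities -/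

/-- The normalised difference `(√v' - √v) / √(v + v')` entering the test statistic. -/
def cc (v v' : ℝ) : ℝ := (Real.sqrt v' - Real.sqrt v) / Real.sqrt (v + v')

lemma exp_bound_small {c : ℝ} (hc : |c| ≤ 1) :
    12 * (Real.exp (c / 12) - 1) ≤ c + 0.0433 * c ^ 2 := by
  have h12 : |c / 12| = |c| / 12 := by rw [abs_div]; norm_num
  have h := Real.exp_bound (x := c / 12) (by rw [h12]; linarith) (n := 3) (by norm_num)
  have h1 := (abs_le.1 h).2
  rw [h12] at h1
  simp only [Finset.sum_range_succ, Finset.sum_range_zero, Nat.factorial] at h1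
  norm_num at h1
  have h2 : |c| ^ 3 ≤ c ^ 2 := by
    rw [← sq_abs c]
    have := abs_nonneg c
    nlinarith [sq_nonneg (|c|)]
  nlinarith [h1, h2]

/-- Quadratic form behind the comparison of the test statistic with the Hellinger losses: the
coefficient of `y ^ 2` on the left is negative enough to absorb that of `(x - y) ^ 2`. -/
lemma quad_form {q x y : ℝ} (h1 : 1.4142 ≤ q) (h2 : q ≤ 1.4143) :
    (1 - q / 2) / 2 * (x - y) ^ 2 + (x ^ 2 - y ^ 2) + q / 2 * (x ^ 2 + y ^ 2)
      + q * 0.0433 * ((x - y) ^ 2 + x ^ 2 + y ^ 2) ≤ 4 * x ^ 2 := by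
  have e1 : (x - y) ^ 2 ≤ 1.11 * y ^ 2 + 10.1 * x ^ 2 := by
    nlinarith [sq_nonneg (x + 0.11 * y), sq_nonneg x, sq_nonneg y]
  have hA : (1 - q / 2) / 2 + q * 0.0433 ≤ 0.2077 := by linarith
  have hA0 : 0 ≤ (1 - q / 2) / 2 + q * 0.0433 := by linarith
  have e2 : ((1 - q / 2) / 2 + q * 0.0433) * (x - y) ^ 2
      ≤ 0.2077 * (1.11 * y ^ 2 + 10.1 * x ^ 2) :=
    mul_le_mul hA e1 (sq_nonneg _) (by norm_num)
  have e3 : (q / 2 + q * 0.0433) * (x ^ 2 + y ^ 2) ≤ 0.7684 * (x ^ 2 + y ^ 2) :=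
    mul_le_mul_of_nonneg_right (by linarith) (by positivity)
  nlinarith [sq_nonneg x, sq_nonneg y]

/-- Pointwise form of the local comparison: `a`, `b`, `u` are the square roots of the two
candidate values and of the true density. -/
lemma key_real {a b u : ℝ} (ha : 0 ≤ a) (hb : 0 ≤ b) (hu : 0 ≤ u) :
    alphaC * (a - b) ^ 2 + 1 / Real.sqrt 2 * (Real.sqrt (a ^ 2 + b ^ 2) * (b - a))
      + (a ^ 2 - b ^ 2)
      + Real.sqrt 2 * 12 * (Real.exp ((b - a) / Real.sqrt (a ^ 2 + b ^ 2) / 12) - 1) * u ^ 2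
      ≤ 4 * (u - a) ^ 2 := by
  set q := Real.sqrt 2 with hq
  have hq2 : q ^ 2 = 2 := Real.sq_sqrt (by norm_num)
  have hq0 : 0 < q := by positivity
  have h1 : (1.4142 : ℝ) ≤ q := Real.le_sqrt_of_sq_le (by norm_num)
  have h2 : q ≤ 1.4143 := Real.sqrt_le_iff.2 ⟨by norm_num, by norm_num⟩
  have hinv : 1 / q = q / 2 := by field_simp; linarith
  have hα : alphaC = (1 - q / 2) / 2 := by rw [alphaC, ← hq, hinv]
  set S := Real.sqrt (a ^ 2 + b ^ 2) with hS
  have hS2 : S ^ 2 = a ^ 2 + b ^ 2 := Real.sq_sqrt (by positivity)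
  have hS0 : 0 ≤ S := Real.sqrt_nonneg _
  rcases hS0.eq_or_lt with h0 | hpos
  · have ha0 : a = 0 := by nlinarith
    have hb0 : b = 0 := by nlinarith
    rw [← h0, ha0, hb0]
    simp
    positivity
  -- `ρ` is the square root of the midpoint of the two densities
  obtain ⟨ρ, hρ⟩ : ∃ ρ, S = q * ρ := ⟨S / q, by field_simp⟩
  have hρ0 : 0 < ρ := by
    rw [hρ] at hpos
    exact pos_of_mul_pos_right hpos hq0.le
  have hρ2 : 2 * ρ ^ 2 = a ^ 2 + b ^ 2 := by rw [← hS2, hρ, mul_pow, hq2]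
  have hρm : (a + b) / 2 ≤ ρ := by
    apply le_of_sq_le_sq _ hρ0.le
    nlinarith [sq_nonneg (a - b)]
  have hbS : b ≤ q * ρ := by
    rw [← hρ]
    exact Real.le_sqrt_of_sq_le (by nlinarith)
  set c := (b - a) / S with hc
  have hc2 : c ^ 2 * (2 * ρ ^ 2) = (b - a) ^ 2 := by
    rw [hc, div_pow, hS2, hρ2]
    have : 0 < a ^ 2 + b ^ 2 := by rw [← hS2]; positivity
    field_simp
  have hc1 : c ^ 2 ≤ 1 := by
    rw [hc, div_pow, div_le_one (by positivity), hS2]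
    nlinarith [mul_nonneg ha hb]
  have habs : |c| ≤ 1 := by
    rw [← sq_le_one_iff_abs_le_one]; exact hc1
  have hexp := exp_bound_small habs
  have hw : (u - ρ) ^ 2 ≤ ((u - a) ^ 2 + (u - b) ^ 2) / 2 := by nlinarith
  have t1 : q * (c * u ^ 2) = (b - a) * (2 * u - ρ) + (b - a) / ρ * (u - ρ) ^ 2 := by
    rw [hc, hρ]; field_simp; ring
  have t2 : (b - a) / ρ * (u - ρ) ^ 2 ≤ q * (u - ρ) ^ 2 := by
    apply mul_le_mul_of_nonneg_right _ (sq_nonneg _)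
    rw [div_le_iff₀ hρ0]; linarith
  have t3 : c ^ 2 * u ^ 2 ≤ (a - b) ^ 2 + (u - a) ^ 2 + (u - b) ^ 2 := by
    have e1 : u ^ 2 ≤ 2 * ρ ^ 2 + 2 * (u - ρ) ^ 2 := by nlinarith [sq_nonneg (u - 2 * ρ)]
    have e2 : c ^ 2 * u ^ 2 ≤ c ^ 2 * (2 * ρ ^ 2 + 2 * (u - ρ) ^ 2) :=
      mul_le_mul_of_nonneg_left e1 (sq_nonneg _)
    have e3 : c ^ 2 * (2 * (u - ρ) ^ 2) ≤ 1 * (2 * (u - ρ) ^ 2) :=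
      mul_le_mul_of_nonneg_right hc1 (by positivity)
    nlinarith
  have t4 : q * 12 * (Real.exp (c / 12) - 1) * u ^ 2
      ≤ q * (c * u ^ 2) + q * 0.0433 * (c ^ 2 * u ^ 2) := by
    have : q * u ^ 2 * (12 * (Real.exp (c / 12) - 1)) ≤ q * u ^ 2 * (c + 0.0433 * c ^ 2) :=
      mul_le_mul_of_nonneg_left hexp (by positivity)
    linarith
  have t5 : q * 0.0433 * (c ^ 2 * u ^ 2)
      ≤ q * 0.0433 * ((a - b) ^ 2 + (u - a) ^ 2 + (u - b) ^ 2) :=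
    mul_le_mul_of_nonneg_left t3 (by positivity)
  have t6 : q * (u - ρ) ^ 2 ≤ q * (((u - a) ^ 2 + (u - b) ^ 2) / 2) :=
    mul_le_mul_of_nonneg_left hw hq0.le
  have t7 := quad_form (x := u - a) (y := u - b) h1 h2
  have t8 : 1 / q * (S * (b - a)) = ρ * (b - a) := by
    rw [hρ]; field_simp
  rw [t8, hα]
  have e : (u - a - (u - b)) ^ 2 = (a - b) ^ 2 := by ring
  rw [e] at t7
  linarith

lemma key_real' {v v' p : ℝ} (hv : 0 ≤ v) (hv' : 0 ≤ v') (hp : 0 ≤ p) :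
    (alphaC * (Real.sqrt v - Real.sqrt v') ^ 2
        + 1 / Real.sqrt 2 * (Real.sqrt (v + v') * (Real.sqrt v' - Real.sqrt v)) + (v - v'))
      + Real.sqrt 2 * 12 * (Real.exp (cc v v' / 12) - 1) * p
      ≤ 4 * (Real.sqrt p - Real.sqrt v) ^ 2 := by
  have := key_real (Real.sqrt_nonneg v) (Real.sqrt_nonneg v') (Real.sqrt_nonneg p)
  rw [Real.sq_sqrt hv, Real.sq_sqrt hv', Real.sq_sqrt hp] at this
  exact this

lemma abs_cc_le {v v' : ℝ} (hv : 0 ≤ v) (hv' : 0 ≤ v') : |cc v v'| ≤ 1 := by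
  rw [← sq_le_one_iff_abs_le_one, cc, div_pow, Real.sq_sqrt (by positivity)]
  apply div_le_one_of_le₀ _ (by positivity)
  nlinarith [Real.sq_sqrt hv, Real.sq_sqrt hv', mul_nonneg (Real.sqrt_nonneg v)
    (Real.sqrt_nonneg v'), sq_nonneg v]

/-! ### Cubes of `ℝ^d × ℝ^d` as products -/

variable {d : ℕ}

/-- The projection of a cube on the first `d` coordinates. -/
def secI (K : CubeIdx d) : Set (Fin d → ℝ) :=
  Set.univ.pi fun i => dyadicI K.1 (K.2 ⟨i, by have := i.isLt; omega⟩)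

/-- The projection of a cube on the last `d` coordinates. -/
def secJ (K : CubeIdx d) : Set (Fin d → ℝ) :=
  Set.univ.pi fun i => dyadicI K.1 (K.2 ⟨d + i, by have := i.isLt; omega⟩)

lemma pairPt_mem_iff (P : Fin (2 * d) → ℝ → Prop) (x y : Fin d → ℝ) :
    (∀ i, P i (pairPt d x y i)) ↔
      (∀ i : Fin d, P ⟨i, by have := i.isLt; omega⟩ (x i)) ∧
      (∀ i : Fin d, P ⟨d + i, by have := i.isLt; omega⟩ (y i)) := by
  constructor
  · intro h
    refine ⟨fun i => ?_, fun i => ?_⟩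
    · have := h ⟨i, by have := i.isLt; omega⟩
      simpa [pairPt] using this
    · have := h ⟨d + i, by have := i.isLt; omega⟩
      simpa [pairPt] using this
  · rintro ⟨h1, h2⟩ i
    by_cases hi : (i : ℕ) < d
    · simpa [pairPt, hi] using h1 ⟨i, hi⟩
    · have hlt := i.isLt
      have := h2 ⟨i - d, by omega⟩
      have e : (⟨d + ((i : ℕ) - d), by omega⟩ : Fin (2 * d)) = i := Fin.ext (by simp; omega)
      simp only [e] at this
      simpa [pairPt, hi] using this

lemma pair_mem_cube (K : CubeIdx d) (x y : Fin d → ℝ) :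
    pairPt d x y ∈ cubeSet d K ↔ x ∈ secI K ∧ y ∈ secJ K := by
  have := pairPt_mem_iff (fun i t => t ∈ dyadicI K.1 (K.2 i)) x y
  simpa [cubeSet, secI, secJ, Set.mem_pi] using this

lemma pair_mem_root (x y : Fin d → ℝ) :
    pairPt d x y ∈ cubeSet d (rootC d) ↔ (x, y) ∈ unitSq d := by
  rw [mem_root, pairPt_mem_iff (fun _ t => 0 ≤ t ∧ t ≤ 1) x y]
  simp only [unitSq, Set.mem_prod, Set.mem_Icc, Pi.le_def, forall_and, Pi.zero_apply, Pi.one_apply]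

lemma indC_eq (K : CubeIdx d) (x y : Fin d → ℝ) :
    indC d K (x, y) = (secI K).indicator (fun _ => (1 : ℝ)) x
      * (secJ K).indicator (fun _ => (1 : ℝ)) y := by
  unfold indC
  by_cases h1 : x ∈ secI K <;> by_cases h2 : y ∈ secJ K <;>
    simp [Set.indicator, pair_mem_cube, h1, h2]

lemma indC_of_mem {K : CubeIdx d} {z : (Fin d → ℝ) × (Fin d → ℝ)}
    (h : pairPt d z.1 z.2 ∈ cubeSet d K) : indC d K z = 1 := by
  simp [indC, h]

lemma indC_of_notMem {K : CubeIdx d} {z : (Fin d → ℝ) × (Fin d → ℝ)}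
    (h : pairPt d z.1 z.2 ∉ cubeSet d K) : indC d K z = 0 := by
  simp [indC, h]

lemma indC_nonneg (K : CubeIdx d) (z) : 0 ≤ indC d K z :=
  Set.indicator_nonneg (fun _ _ => zero_le_one) _

lemma indC_le_one (K : CubeIdx d) (z) : indC d K z ≤ 1 := by
  unfold indC
  exact Set.indicator_le' (fun _ _ => le_rfl) (fun _ _ => zero_le_one) _

lemma measurableSet_dyadicI (j l : ℕ) : MeasurableSet (dyadicI j l) := by
  unfold dyadicI; split_ifs
  · exact measurableSet_Icc
  · exact measurableSet_Ico

lemma measurableSet_secI (K : CubeIdx d) : MeasurableSet (secI K) :=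
  MeasurableSet.univ_pi fun _ => measurableSet_dyadicI _ _

lemma measurableSet_secJ (K : CubeIdx d) : MeasurableSet (secJ K) :=
  MeasurableSet.univ_pi fun _ => measurableSet_dyadicI _ _

lemma measurable_indC (K : CubeIdx d) : Measurable (indC d K) := by
  have : indC d K = fun z => (secI K).indicator (fun _ => (1 : ℝ)) z.1
      * (secJ K).indicator (fun _ => (1 : ℝ)) z.2 := by
    funext z; exact indC_eq K z.1 z.2
  rw [this]
  exact ((measurable_const.indicator (measurableSet_secI K)).comp measurable_fst).mul
    ((measurable_const.indicator (measurableSet_secJ K)).comp measurable_snd)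

lemma measurable_indC_right (K : CubeIdx d) (x : Fin d → ℝ) :
    Measurable fun y => indC d K (x, y) :=
  (measurable_indC K).comp measurable_prodMk_left

lemma volume_dyadicI (j l : ℕ) :
    volume (dyadicI j l) = ENNReal.ofReal (1 / 2 ^ j) := by
  unfold dyadicI
  split_ifs with h
  · have h' : (l : ℝ) + 1 = 2 ^ j := by exact_mod_cast h
    rw [Real.volume_Icc]
    congr 1
    rw [← h']
    field_simp
    ring
  · rw [Real.volume_Ico]
    congr 1
    ring

lemma volume_secJ (K : CubeIdx d) :
    volume (secJ K) = ENNReal.ofReal ((1 / 2 ^ K.1) ^ d) := by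
  unfold secJ
  rw [volume_pi_pi]
  rw [Finset.prod_congr rfl fun i _ => volume_dyadicI _ _]
  rw [Finset.prod_const, Finset.card_univ, Fintype.card_fin, ENNReal.ofReal_pow (by positivity)]

lemma integrable_indJ (K : CubeIdx d) :
    Integrable ((secJ K).indicator fun _ => (1 : ℝ)) := by
  rw [integrable_indicator_iff (measurableSet_secJ K), integrableOn_const_iff]
  right
  rw [volume_secJ K]
  exact ENNReal.ofReal_lt_top

lemma integral_indC (K : CubeIdx d) (x : Fin d → ℝ) :
    ∫ y, indC d K (x, y) = (secI K).indicator (fun _ => (1 : ℝ)) x * (1 / 2 ^ K.1) ^ d := by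
  simp_rw [indC_eq]
  rw [integral_const_mul, integral_indicator_const _ (measurableSet_secJ K), Measure.real,
    volume_secJ K, ENNReal.toReal_ofReal (by positivity), smul_eq_mul, mul_one]

lemma integrable_indC (K : CubeIdx d) (x : Fin d → ℝ) :
    Integrable fun y => indC d K (x, y) := by
  simp_rw [indC_eq]
  exact (integrable_indJ K).const_mul _

lemma Integrable.indC_mul {g : (Fin d → ℝ) → ℝ} (hg : Integrable g) (K : CubeIdx d)
    (x : Fin d → ℝ) : Integrable fun y => indC d K (x, y) * g y := by
  refine hg.bdd_mul (c := 1) (measurable_indC_right K x).aestronglyMeasurable ?_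
  refine Filter.Eventually.of_forall fun y => ?_
  rw [Real.norm_eq_abs, abs_of_nonneg (indC_nonneg _ _)]
  exact indC_le_one _ _

/-! ### Values of the histogram estimators -/

variable {Ω : Type}

/-- Number of transitions in the cube `K`. -/
def Nsum (n : ℕ) (X : ℕ → Ω → (Fin d → ℝ)) (K : CubeIdx d) (ω : Ω) : ℝ :=
  ∑ i ∈ Finset.range n, indC d K (X i ω, X (i + 1) ω)

/-- Denominator of the histogram estimator on the cube `K`. -/
def Msum (n : ℕ) (X : ℕ → Ω → (Fin d → ℝ)) (K : CubeIdx d) (ω : Ω) : ℝ :=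
  ∑ i ∈ Finset.range n, ∫ y, indC d K (X i ω, y)

/-- Value of the histogram estimator on the cube `K`. -/
def val (n : ℕ) (X : ℕ → Ω → (Fin d → ℝ)) (K : CubeIdx d) (ω : Ω) : ℝ :=
  Nsum n X K ω / Msum n X K ω

lemma histEst_def (n : ℕ) (X : ℕ → Ω → (Fin d → ℝ)) (m : Finset (CubeIdx d)) (ω : Ω) :
    histEst d n X m ω = fun p => ∑ K ∈ m, val n X K ω * indC d K p := rfl

/-- The finite set of possible values of the histogram estimators on cubes of level at
most `n`: counts at most `n` divided by a count at most `n` times a volume. -/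
def valSet (d n : ℕ) : Finset ℝ :=
  (Finset.range (n + 1) ×ˢ Finset.range (n + 1) ×ˢ Finset.range (n + 1)).image
    fun t => (t.1 : ℝ) / ((t.2.1 : ℝ) * (1 / 2 ^ t.2.2) ^ d)

lemma card_valSet (d n : ℕ) : (valSet d n).card ≤ (n + 1) ^ 3 := by
  refine Finset.card_image_le.trans ?_
  simp [Finset.card_product]
  apply le_of_eq; ring

lemma valSet_nonneg {n : ℕ} {v : ℝ} (h : v ∈ valSet d n) : 0 ≤ v := by
  obtain ⟨t, -, rfl⟩ := Finset.mem_image.1 h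
  positivity

lemma sum_indicator_count {α : Type*} (n : ℕ) (S : ℕ → Set α) (x : ℕ → α) :
    ∑ i ∈ Finset.range n, (S i).indicator (fun _ => (1 : ℝ)) (x i)
      = (((Finset.range n).filter fun i => x i ∈ S i).card : ℝ) := by
  rw [Finset.card_filter]
  push_cast
  refine Finset.sum_congr rfl fun i _ => ?_
  simp [Set.indicator]

/-- The numerator of the histogram value counts transitions, and the denominator is the number of
visits to the first projection of the cube times the volume of the second one. -/
lemma val_mem {n : ℕ} (X : ℕ → Ω → (Fin d → ℝ)) {K : CubeIdx d} (hn : K.1 ≤ n)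
    (ω : Ω) : val n X K ω ∈ valSet d n := by
  have hle : ∀ p : ℕ → Prop, ((Finset.range n).filter p).card < n + 1 := fun p =>
    Nat.lt_succ_of_le ((Finset.card_filter_le _ _).trans (by simp))
  refine Finset.mem_image.2
    ⟨(((Finset.range n).filter fun i => pairPt d (X i ω) (X (i + 1) ω) ∈ cubeSet d K).card,
      ((Finset.range n).filter fun i => X i ω ∈ secI K).card, K.1), ?_, ?_⟩
  · simp only [Finset.mem_product, Finset.mem_range]
    exact ⟨hle _, hle _, by omega⟩
  · simp only [val, Nsum, Msum]
    simp_rw [integral_indC K]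
    rw [← Finset.sum_mul, sum_indicator_count n (fun _ => secI K) (fun i => X i ω)]
    have := sum_indicator_count n (fun _ => cubeSet d K)
      (fun i => pairPt d (X i ω) (X (i + 1) ω))
    unfold indC
    rw [this]

lemma val_nonneg (n : ℕ) (X : ℕ → Ω → (Fin d → ℝ)) (K : CubeIdx d) (ω : Ω) :
    0 ≤ val n X K ω :=
  div_nonneg (Finset.sum_nonneg fun _ _ => indC_nonneg _ _)
    (Finset.sum_nonneg fun _ _ => integral_nonneg fun _ => indC_nonneg _ _)

/-! ### The local comparison on one cube -/

/-- Integral of the transition density over the cube `K`, summed along the chain. -/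
def Psum (s : (Fin d → ℝ) → (Fin d → ℝ) → ℝ) (n : ℕ) (X : ℕ → Ω → (Fin d → ℝ))
    (K : CubeIdx d) (ω : Ω) : ℝ :=
  ∑ i ∈ Finset.range n, ∫ y, indC d K (X i ω, y) * s (X i ω) y

/-- Logarithm of the exponential supermartingale attached to a cube `K` and a pair of
values `v, v'`, with parameter `λ = 1/12`. -/
def Wst (s : (Fin d → ℝ) → (Fin d → ℝ) → ℝ) (n : ℕ) (X : ℕ → Ω → (Fin d → ℝ))
    (K : CubeIdx d) (v v' : ℝ) (ω : Ω) : ℝ :=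
  cc v v' / 12 * Nsum n X K ω - (Real.exp (cc v v' / 12) - 1) * Psum s n X K ω

/-- Squared Hellinger loss on the cube `K` of the constant `v`. -/
def hs (s : (Fin d → ℝ) → (Fin d → ℝ) → ℝ) (n : ℕ) (X : ℕ → Ω → (Fin d → ℝ))
    (K : CubeIdx d) (v : ℝ) (ω : Ω) : ℝ :=
  1 / (2 * n) * ∑ i ∈ Finset.range n,
    ∫ y, indC d K (X i ω, y) * (Real.sqrt (s (X i ω) y) - Real.sqrt v) ^ 2

lemma indC_zero_or_one (K : CubeIdx d) (z) : indC d K z = 0 ∨ indC d K z = 1 := by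
  by_cases h : pairPt d z.1 z.2 ∈ cubeSet d K
  · exact Or.inr (indC_of_mem h)
  · exact Or.inl (indC_of_notMem h)

lemma hellSq_const (n : ℕ) (X : ℕ → Ω → (Fin d → ℝ)) (K : CubeIdx d) (v v' : ℝ) (ω : Ω) :
    hellSq d n X ω (fun p => v * indC d K p) (fun p => v' * indC d K p)
      = 1 / (2 * n) * ((Real.sqrt v - Real.sqrt v') ^ 2 * Msum n X K ω) := by
  unfold hellSq Msum
  rw [Finset.mul_sum (Finset.range n) _ ((Real.sqrt v - Real.sqrt v') ^ 2)]
  congr 1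
  refine Finset.sum_congr rfl fun i _ => ?_
  rw [← integral_const_mul]
  congr 1
  funext y
  rcases indC_zero_or_one K (X i ω, y) with h | h <;> simp [h]

lemma Tstat_const (n : ℕ) (X : ℕ → Ω → (Fin d → ℝ)) (K : CubeIdx d) (v v' : ℝ) (ω : Ω) :
    Tstat d n X ω (fun p => v * indC d K p) (fun p => v' * indC d K p)
      = 1 / (2 * Real.sqrt 2 * n) *
          (Real.sqrt (v + v') * (Real.sqrt v' - Real.sqrt v) * Msum n X K ω)
        + 1 / (Real.sqrt 2 * n) * (cc v v' * Nsum n X K ω)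
        + 1 / (2 * n) * ((v - v') * Msum n X K ω) := by
  unfold Tstat Msum Nsum
  rw [Finset.mul_sum (Finset.range n) _ (Real.sqrt (v + v') * (Real.sqrt v' - Real.sqrt v)),
    Finset.mul_sum (Finset.range n) _ (cc v v'), Finset.mul_sum (Finset.range n) _ (v - v')]
  congr 1
  congr 1
  · congr 1
    refine Finset.sum_congr rfl fun i _ => ?_
    rw [← integral_const_mul]
    congr 1
    funext y
    rcases indC_zero_or_one K (X i ω, y) with h | h <;> simp [h]
  · congr 1
    refine Finset.sum_congr rfl fun i _ => ?_
    rcases indC_zero_or_one K (X i ω, X (i + 1) ω) with h | h <;> simp [h, cc]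
  · congr 1
    refine Finset.sum_congr rfl fun i _ => ?_
    rw [← integral_const_mul]
    congr 1
    funext y
    ring

lemma integrable_sq_sqrt {α : Type*} [MeasurableSpace α] {μ : Measure α} {f g : α → ℝ}
    (hf : Integrable f μ) (hg : Integrable g μ) (hfm : Measurable f) (hgm : Measurable g)
    (hf0 : ∀ x, 0 ≤ f x) (hg0 : ∀ x, 0 ≤ g x) :
    Integrable (fun x => (Real.sqrt (f x) - Real.sqrt (g x)) ^ 2) μ := by
  refine Integrable.mono' (hf.add hg) ?_ (Filter.Eventually.of_forall fun x => ?_)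
  · exact ((hfm.sqrt.sub hgm.sqrt).pow_const 2).aestronglyMeasurable
  · rw [Real.norm_eq_abs, abs_of_nonneg (sq_nonneg _)]
    simp only [Pi.add_apply]
    nlinarith [Real.sq_sqrt (hf0 x), Real.sq_sqrt (hg0 x),
      mul_nonneg (Real.sqrt_nonneg (f x)) (Real.sqrt_nonneg (g x))]

lemma integrable_hs_term {s : (Fin d → ℝ) → (Fin d → ℝ) → ℝ}
    (hsm : Measurable (Function.uncurry s)) (hs0 : ∀ x y, 0 ≤ s x y)
    (hs1 : ∀ x, ∫ y, s x y = 1) (K : CubeIdx d) {v : ℝ} (hv : 0 ≤ v)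
    (x : Fin d → ℝ) :
    Integrable fun y => indC d K (x, y) * (Real.sqrt (s x y) - Real.sqrt v) ^ 2 := by
  have hsx : Measurable (s x) := hsm.comp measurable_prodMk_left
  have hsi : Integrable (s x) := by
    by_contra h
    have := integral_undef h
    rw [hs1] at this
    norm_num at this
  have hm := measurable_indC_right K x
  have := integrable_sq_sqrt (Integrable.indC_mul hsi K x) ((integrable_indC K x).mul_const v)
    (hm.mul hsx) (hm.mul_const v) (fun y => mul_nonneg (indC_nonneg _ _) (hs0 _ _))
    (fun y => mul_nonneg (indC_nonneg _ _) hv)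
  refine this.congr (Filter.Eventually.of_forall fun y => ?_)
  rcases indC_zero_or_one K (x, y) with h | h <;> simp [h]

/-- On one cube, `α H² + T` is at most four times the loss of the first value plus the
fluctuation term. -/
lemma local_bound {s : (Fin d → ℝ) → (Fin d → ℝ) → ℝ}
    (hsm : Measurable (Function.uncurry s)) (hs0 : ∀ x y, 0 ≤ s x y)
    (hs1 : ∀ x, ∫ y, s x y = 1) {n : ℕ} (hn : 0 < n) (X : ℕ → Ω → (Fin d → ℝ))
    (K : CubeIdx d) {v v' : ℝ} (hv : 0 ≤ v) (hv' : 0 ≤ v') (ω : Ω) :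
    alphaC * hellSq d n X ω (fun p => v * indC d K p) (fun p => v' * indC d K p)
      + Tstat d n X ω (fun p => v * indC d K p) (fun p => v' * indC d K p)
      ≤ 4 * hs s n X K v ω + 12 / (Real.sqrt 2 * n) * Wst s n X K v v' ω := by
  set D := alphaC * (Real.sqrt v - Real.sqrt v') ^ 2
        + 1 / Real.sqrt 2 * (Real.sqrt (v + v') * (Real.sqrt v' - Real.sqrt v)) + (v - v') with hD
  set E := Real.sqrt 2 * 12 * (Real.exp (cc v v' / 12) - 1) with hE
  set H := ∑ i ∈ Finset.range n,
    ∫ y, indC d K (X i ω, y) * (Real.sqrt (s (X i ω) y) - Real.sqrt v) ^ 2 with hH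
  have hn' : (0 : ℝ) < n := by exact_mod_cast hn
  have hsum : D * Msum n X K ω + E * Psum s n X K ω ≤ 4 * H := by
    rw [hH, Msum, Psum, Finset.mul_sum, Finset.mul_sum, Finset.mul_sum, ← Finset.sum_add_distrib]
    refine Finset.sum_le_sum fun i _ => ?_
    have hsi : Integrable (s (X i ω)) := by
      by_contra h
      have := integral_undef h
      rw [hs1] at this
      norm_num at this
    rw [← integral_const_mul, ← integral_const_mul, ← integral_const_mul, ← integral_add
      ((integrable_indC K _).const_mul _) ((Integrable.indC_mul hsi K _).const_mul _)]
    refine integral_mono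
      (((integrable_indC K _).const_mul _).add ((Integrable.indC_mul hsi K _).const_mul _))
      ((integrable_hs_term hsm hs0 hs1 K hv _).const_mul _) fun y => ?_
    have := mul_le_mul_of_nonneg_left (key_real' hv hv' (hs0 (X i ω) y))
      (indC_nonneg K (X i ω, y))
    rw [← hD, ← hE] at this
    simp only
    linarith
  rw [hellSq_const, Tstat_const, hs, ← hH, Wst]
  have hq : Real.sqrt 2 ^ 2 = 2 := Real.sq_sqrt (by norm_num)
  have hq0 : 0 < Real.sqrt 2 := by positivity
  have e1 : 12 / (Real.sqrt 2 * n) = 1 / (2 * n) * (Real.sqrt 2 * 12) := by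
    field_simp; linarith
  have e2 : 1 / (2 * Real.sqrt 2 * n) = 1 / (2 * n) * (1 / Real.sqrt 2) := by field_simp
  have e3 : 1 / (Real.sqrt 2 * n) = 1 / (2 * n) * Real.sqrt 2 := by
    field_simp; linarith
  rw [e1, e2, e3]
  have := mul_le_mul_of_nonneg_left hsum (show 0 ≤ 1 / (2 * (n : ℝ)) by positivity)
  have e4 : alphaC * (1 / (2 * n) * ((Real.sqrt v - Real.sqrt v') ^ 2 * Msum n X K ω)) +
      (1 / (2 * n) * (1 / Real.sqrt 2) *
        (Real.sqrt (v + v') * (Real.sqrt v' - Real.sqrt v) * Msum n X K ω)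
        + 1 / (2 * n) * Real.sqrt 2 * (cc v v' * Nsum n X K ω)
        + 1 / (2 * n) * ((v - v') * Msum n X K ω))
      = 1 / (2 * n) * (D * Msum n X K ω + Real.sqrt 2 * (cc v v' * Nsum n X K ω)) := by
    rw [hD]; ring
  have e5 : 4 * (1 / (2 * n) * H) + 1 / (2 * n) * (Real.sqrt 2 * 12) *
      (cc v v' / 12 * Nsum n X K ω - (Real.exp (cc v v' / 12) - 1) * Psum s n X K ω)
      = 1 / (2 * n) * (4 * H) - 1 / (2 * n) * (E * Psum s n X K ω)
        + 1 / (2 * n) * (Real.sqrt 2 * (cc v v' * Nsum n X K ω)) := by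
    rw [hE]; ring
  rw [e4, e5]
  linarith

end DyadicSel
end

noncomputable section
open Classical

namespace DyadicSel

variable {d : ℕ} {Ω : Type}

/-! ### The exponential supermartingale -/

/-- The `σ`-algebra generated by `X_0, …, X_k`. -/
abbrev past (X : ℕ → Ω → (Fin d → ℝ)) (k : ℕ) : MeasurableSpace Ω :=
  ⨆ j ∈ Finset.range (k + 1), MeasurableSpace.comap (X j) inferInstance

/-- The Markov property with transition density `s`, up to time `n`. -/
def IsMarkov [MeasurableSpace Ω] (P : Measure Ω) (n : ℕ) (X : ℕ → Ω → (Fin d → ℝ))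
    (s : (Fin d → ℝ) → (Fin d → ℝ) → ℝ) : Prop :=
  ∀ i, i < n → ∀ g : (Fin d → ℝ) → ℝ, Measurable g → (∃ c, ∀ x, |g x| ≤ c) →
    P[(fun ω => g (X (i + 1) ω)) | past X i] =ᵐ[P] fun ω => ∫ y, g y * s (X i ω) y

lemma past_le [mΩ : MeasurableSpace Ω] {X : ℕ → Ω → (Fin d → ℝ)} (hX : ∀ i, Measurable (X i))
    (k : ℕ) : past X k ≤ mΩ :=
  iSup₂_le fun j _ => (hX j).comap_le

lemma past_meas (X : ℕ → Ω → (Fin d → ℝ)) {j k : ℕ} (hjk : j ≤ k) :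
    Measurable[past X k] (X j) := by
  have h : MeasurableSpace.comap (X j) inferInstance ≤ past X k :=
    le_iSup₂_of_le (f := fun j (_ : j ∈ Finset.range (k + 1)) =>
      MeasurableSpace.comap (X j) inferInstance) j (Finset.mem_range.2 (by omega)) le_rfl
  exact (comap_measurable (X j)).mono h le_rfl

lemma integrable_of_abs_le [MeasurableSpace Ω] {P : Measure Ω} [IsProbabilityMeasure P]
    {f : Ω → ℝ} (hf : Measurable f) (hb : ∃ C, ∀ ω, |f ω| ≤ C) : Integrable f P := by
  obtain ⟨C, hC⟩ := hb
  exact Integrable.of_bound hf.aestronglyMeasurable C (Filter.Eventually.of_forall hC)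

/-- The Markov property tested against a bounded function of the past. -/
lemma markov_step [MeasurableSpace Ω] {P : Measure Ω} [IsProbabilityMeasure P]
    {n : ℕ} {X : ℕ → Ω → (Fin d → ℝ)} (hX : ∀ i, Measurable (X i))
    {s : (Fin d → ℝ) → (Fin d → ℝ) → ℝ} (hM : IsMarkov P n X s) {k : ℕ} (hk : k < n)
    {B : Ω → ℝ} (hB : Measurable[past X k] B) (hb : ∃ C, ∀ ω, |B ω| ≤ C)
    {g : (Fin d → ℝ) → ℝ} (hg : Measurable g) (hgb : ∃ c, ∀ x, |g x| ≤ c) :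
    ∫ ω, B ω * g (X (k + 1) ω) ∂P = ∫ ω, B ω * (∫ y, g y * s (X k ω) y) ∂P := by
  have hle := past_le hX k
  have hgm : Measurable fun ω => g (X (k + 1) ω) := hg.comp (hX _)
  have hBm : Measurable B := hB.mono hle le_rfl
  obtain ⟨C, hC⟩ := hb
  obtain ⟨c, hc⟩ := hgb
  have hgi : Integrable (fun ω => g (X (k + 1) ω)) P :=
    integrable_of_abs_le hgm ⟨c, fun ω => hc _⟩
  have hBg : Integrable (B * fun ω => g (X (k + 1) ω)) P := by
    refine integrable_of_abs_le (hBm.mul hgm) ⟨C * c, fun ω => ?_⟩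
    rw [Pi.mul_apply, abs_mul]
    exact mul_le_mul (hC ω) (hc _) (abs_nonneg _) ((abs_nonneg _).trans (hC ω))
  have h1 := condExp_mul_of_stronglyMeasurable_left (m := past X k) (μ := P)
    hB.stronglyMeasurable hBg hgi
  have h2 := hM k hk g hg ⟨c, hc⟩
  calc ∫ ω, B ω * g (X (k + 1) ω) ∂P
      = ∫ ω, (P[B * (fun ω => g (X (k + 1) ω)) | past X k]) ω ∂P :=
        (integral_condExp hle).symm
    _ = ∫ ω, B ω * (∫ y, g y * s (X k ω) y) ∂P := by
        refine integral_congr_ae ?_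
        filter_upwards [h1, h2] with ω h3 h4
        rw [h3, Pi.mul_apply, h4]

/-- One-step conditional mass of a cube from the point `x`. -/
def pK (s : (Fin d → ℝ) → (Fin d → ℝ) → ℝ) (K : CubeIdx d) (x : Fin d → ℝ) : ℝ :=
  ∫ y, indC d K (x, y) * s x y

lemma integrable_s {s : (Fin d → ℝ) → (Fin d → ℝ) → ℝ} (hs1 : ∀ x, ∫ y, s x y = 1)
    (x : Fin d → ℝ) : Integrable (s x) := by
  by_contra h
  have := integral_undef h
  rw [hs1] at this
  norm_num at this

lemma measurable_pK {s : (Fin d → ℝ) → (Fin d → ℝ) → ℝ}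
    (hsm : Measurable (Function.uncurry s)) (K : CubeIdx d) : Measurable (pK s K) := by
  refine StronglyMeasurable.measurable
    (StronglyMeasurable.integral_prod_right (f := fun x y => indC d K (x, y) * s x y) ?_)
  exact ((measurable_indC K).mul hsm).stronglyMeasurable

lemma abs_pK_le {s : (Fin d → ℝ) → (Fin d → ℝ) → ℝ} (hs0 : ∀ x y, 0 ≤ s x y)
    (hs1 : ∀ x, ∫ y, s x y = 1) (K : CubeIdx d) (x : Fin d → ℝ) : |pK s K x| ≤ 1 := by
  have h0 : 0 ≤ pK s K x := integral_nonneg fun y => mul_nonneg (indC_nonneg _ _) (hs0 _ _)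
  rw [abs_of_nonneg h0, ← hs1 x]
  exact integral_mono (Integrable.indC_mul (integrable_s hs1 x) K x) (integrable_s hs1 x)
    fun y => mul_le_of_le_one_left (hs0 _ _) (indC_le_one _ _)

/-- The compensated exponent accumulated along one transition. -/
def incr (s : (Fin d → ℝ) → (Fin d → ℝ) → ℝ) {ι : Type} (S : Finset ι) (κ : ι → CubeIdx d)
    (c : ι → ℝ) (x y : Fin d → ℝ) : ℝ :=
  ∑ a ∈ S, c a * indC d (κ a) (x, y) - ∑ a ∈ S, (Real.exp (c a) - 1) * pK s (κ a) x

/-- At most one of the disjoint indicators is nonzero, so the exponential is affine in them. -/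
lemma exp_sum_ind {ι : Type} {S : Finset ι} {κ : ι → CubeIdx d}
    (hdisj : ∀ a ∈ S, ∀ b ∈ S, ∀ z, z ∈ cubeSet d (κ a) → z ∈ cubeSet d (κ b) → a = b)
    (c : ι → ℝ) (z : (Fin d → ℝ) × (Fin d → ℝ)) :
    Real.exp (∑ a ∈ S, c a * indC d (κ a) z)
      = 1 + ∑ a ∈ S, (Real.exp (c a) - 1) * indC d (κ a) z := by
  by_cases h : ∃ a ∈ S, pairPt d z.1 z.2 ∈ cubeSet d (κ a)
  · obtain ⟨a, ha, hz⟩ := h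
    have h0 : ∀ b ∈ S, b ≠ a → indC d (κ b) z = 0 := fun b hb hba =>
      indC_of_notMem fun hzb => hba (hdisj b hb a ha _ hzb hz)
    rw [Finset.sum_eq_single_of_mem a ha fun b hb hba => by rw [h0 b hb hba, mul_zero],
      Finset.sum_eq_single_of_mem a ha fun b hb hba => by rw [h0 b hb hba, mul_zero],
      indC_of_mem hz]
    ring_nf
  · push Not at h
    rw [Finset.sum_eq_zero fun b hb => by rw [indC_of_notMem (h b hb), mul_zero],
      Finset.sum_eq_zero fun b hb => by rw [indC_of_notMem (h b hb), mul_zero]]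
    simp

lemma measurable_incr {s : (Fin d → ℝ) → (Fin d → ℝ) → ℝ}
    (hsm : Measurable (Function.uncurry s)) {ι : Type} (S : Finset ι) (κ : ι → CubeIdx d)
    (c : ι → ℝ) : Measurable (Function.uncurry (incr s S κ c)) := by
  unfold incr Function.uncurry
  refine Measurable.sub ?_ ?_
  · exact Finset.measurable_sum S fun a _ => (measurable_indC (κ a)).const_mul _
  · exact Finset.measurable_sum S fun a _ =>
      ((measurable_pK hsm (κ a)).comp measurable_fst).const_mul _

lemma abs_incr_le {s : (Fin d → ℝ) → (Fin d → ℝ) → ℝ} (hs0 : ∀ x y, 0 ≤ s x y)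
    (hs1 : ∀ x, ∫ y, s x y = 1) {ι : Type} (S : Finset ι) (κ : ι → CubeIdx d) (c : ι → ℝ) :
    ∃ C, ∀ x y, |incr s S κ c x y| ≤ C := by
  refine ⟨∑ a ∈ S, |c a| + ∑ a ∈ S, |Real.exp (c a) - 1|, fun x y => ?_⟩
  refine (abs_sub _ _).trans (add_le_add ?_ ?_)
  · refine (Finset.abs_sum_le_sum_abs _ _).trans (Finset.sum_le_sum fun a _ => ?_)
    rw [abs_mul, abs_of_nonneg (indC_nonneg _ _)]
    exact mul_le_of_le_one_right (abs_nonneg _) (indC_le_one _ _)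
  · refine (Finset.abs_sum_le_sum_abs _ _).trans (Finset.sum_le_sum fun a _ => ?_)
    rw [abs_mul]
    exact mul_le_of_le_one_right (abs_nonneg _) (abs_pK_le hs0 hs1 _ _)

lemma measurable_incr_comp [MeasurableSpace Ω] {s : (Fin d → ℝ) → (Fin d → ℝ) → ℝ}
    (hsm : Measurable (Function.uncurry s)) {ι : Type} (S : Finset ι) (κ : ι → CubeIdx d)
    (c : ι → ℝ) {Y Z : Ω → (Fin d → ℝ)} (hY : Measurable Y) (hZ : Measurable Z) :
    Measurable fun ω => incr s S κ c (Y ω) (Z ω) := by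
  have h : Measurable fun ω => (Y ω, Z ω) := hY.prodMk hZ
  have h2 := (measurable_incr hsm S κ c).comp h
  exact h2

lemma measurable_expG_aux [MeasurableSpace Ω] {s : (Fin d → ℝ) → (Fin d → ℝ) → ℝ}
    (hsm : Measurable (Function.uncurry s)) {X : ℕ → Ω → (Fin d → ℝ)}
    {ι : Type} (S : Finset ι) (κ : ι → CubeIdx d) (c : ι → ℝ) (k : ℕ)
    (hX : ∀ i ≤ k, Measurable (X i)) :
    Measurable fun ω =>
      Real.exp (∑ i ∈ Finset.range k, incr s S κ c (X i ω) (X (i + 1) ω)) := by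
  have h : ∀ i ∈ Finset.range k, Measurable fun ω => incr s S κ c (X i ω) (X (i + 1) ω) := by
    intro i hi
    exact measurable_incr_comp hsm S κ c (hX i (by simp at hi; omega))
      (hX (i + 1) (by simp at hi; omega))
  exact (Finset.measurable_sum (Finset.range k) h).exp

lemma measurable_expG {s : (Fin d → ℝ) → (Fin d → ℝ) → ℝ}
    (hsm : Measurable (Function.uncurry s)) {X : ℕ → Ω → (Fin d → ℝ)}
    {ι : Type} (S : Finset ι) (κ : ι → CubeIdx d) (c : ι → ℝ) (k : ℕ) :
    Measurable[past X k] fun ω =>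
      Real.exp (∑ i ∈ Finset.range k, incr s S κ c (X i ω) (X (i + 1) ω)) := by
  exact @measurable_expG_aux d Ω (past X k) s hsm X ι S κ c k fun i hi => past_meas X hi

lemma bounded_expG {s : (Fin d → ℝ) → (Fin d → ℝ) → ℝ} (hs0 : ∀ x y, 0 ≤ s x y)
    (hs1 : ∀ x, ∫ y, s x y = 1) (X : ℕ → Ω → (Fin d → ℝ))
    {ι : Type} (S : Finset ι) (κ : ι → CubeIdx d) (c : ι → ℝ) (k : ℕ) :
    ∃ C, ∀ ω, |Real.exp (∑ i ∈ Finset.range k, incr s S κ c (X i ω) (X (i + 1) ω))| ≤ C := by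
  obtain ⟨C, hC⟩ := abs_incr_le hs0 hs1 S κ c
  refine ⟨Real.exp (∑ i ∈ Finset.range k, C), fun ω => ?_⟩
  rw [Real.abs_exp, Real.exp_le_exp]
  exact Finset.sum_le_sum fun i _ => (le_abs_self _).trans (hC _ _)

/-- For disjoint cubes, the compensated exponential has expectation at most one. -/
lemma supermartingale [MeasurableSpace Ω] {P : Measure Ω} [IsProbabilityMeasure P]
    {n : ℕ} {X : ℕ → Ω → (Fin d → ℝ)} (hX : ∀ i, Measurable (X i))
    {s : (Fin d → ℝ) → (Fin d → ℝ) → ℝ} (hsm : Measurable (Function.uncurry s))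
    (hs0 : ∀ x y, 0 ≤ s x y) (hs1 : ∀ x, ∫ y, s x y = 1) (hM : IsMarkov P n X s)
    {ι : Type} {S : Finset ι} {κ : ι → CubeIdx d}
    (hdisj : ∀ a ∈ S, ∀ b ∈ S, ∀ z, z ∈ cubeSet d (κ a) → z ∈ cubeSet d (κ b) → a = b)
    (c : ι → ℝ) (k : ℕ) (hk : k ≤ n) :
    ∫ ω, Real.exp (∑ i ∈ Finset.range k, incr s S κ c (X i ω) (X (i + 1) ω)) ∂P ≤ 1 := by
  induction k with
  | zero => simp
  | succ k ih =>
    refine le_trans ?_ (ih (by omega))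
    set G : Ω → ℝ := fun ω =>
      Real.exp (∑ i ∈ Finset.range k, incr s S κ c (X i ω) (X (i + 1) ω)) with hG
    set Q : (Fin d → ℝ) → ℝ := fun x => ∑ a ∈ S, (Real.exp (c a) - 1) * pK s (κ a) x with hQ
    set B : Ω → ℝ := fun ω => G ω * Real.exp (-Q (X k ω)) with hB
    have hQm : Measurable Q := Finset.measurable_sum S fun a _ =>
      (measurable_pK hsm (κ a)).const_mul _
    have hGm : Measurable[past X k] G := measurable_expG hsm S κ c k
    have hBm : Measurable[past X k] B :=
      hGm.mul ((hQm.comp (past_meas X le_rfl)).neg.exp)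
    obtain ⟨C, hC⟩ := bounded_expG hs0 hs1 X S κ c k
    have hQb : ∀ x, |Q x| ≤ ∑ a ∈ S, |Real.exp (c a) - 1| := fun x => by
      refine (Finset.abs_sum_le_sum_abs _ _).trans (Finset.sum_le_sum fun a _ => ?_)
      rw [abs_mul]
      exact mul_le_of_le_one_right (abs_nonneg _) (abs_pK_le hs0 hs1 _ _)
    obtain ⟨D, hD⟩ : ∃ D, ∀ ω, |B ω| ≤ D := by
      refine ⟨C * Real.exp (∑ a ∈ S, |Real.exp (c a) - 1|), fun ω => ?_⟩
      rw [hB]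
      simp only
      rw [abs_mul, Real.abs_exp (-Q (X k ω))]
      refine mul_le_mul (hC ω) (Real.exp_le_exp.2 ?_) (Real.exp_pos _).le
        ((abs_nonneg _).trans (hC ω))
      exact (neg_le_abs _).trans (hQb _)
    have hle := past_le hX k
    have hGm' : Measurable G := hGm.mono hle le_rfl
    have hBm' : Measurable B := hBm.mono hle le_rfl
    have hBi : Integrable B P := integrable_of_abs_le hBm' ⟨D, hD⟩
    have hGi : Integrable G P := integrable_of_abs_le hGm' ⟨C, hC⟩
    have hXp : ∀ i, Measurable (X i) := hX
    have hti : ∀ K : CubeIdx d, Integrable (fun ω => B ω * indC d K (X k ω, X (k + 1) ω)) P := by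
      intro K
      refine integrable_of_abs_le (hBm'.mul ((measurable_indC K).comp
        ((hX k).prodMk (hX (k + 1))))) ⟨D, fun ω => ?_⟩
      rw [abs_mul, abs_of_nonneg (indC_nonneg _ _)]
      exact (mul_le_of_le_one_right (abs_nonneg _) (indC_le_one _ _)).trans (hD ω)
    have hpi : ∀ K : CubeIdx d, Integrable (fun ω => B ω * pK s K (X k ω)) P := by
      intro K
      refine integrable_of_abs_le (hBm'.mul ((measurable_pK hsm K).comp (hX k)))
        ⟨D, fun ω => ?_⟩
      rw [abs_mul]
      exact (mul_le_of_le_one_right (abs_nonneg _) (abs_pK_le hs0 hs1 _ _)).trans (hD ω)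
    -- conditioning on the past replaces the indicator of a cube by its conditional mass
    have hstep : ∀ K : CubeIdx d, ∫ ω, B ω * indC d K (X k ω, X (k + 1) ω) ∂P
        = ∫ ω, B ω * pK s K (X k ω) ∂P := by
      intro K
      have hI : Measurable[past X k] fun ω =>
          (secI K).indicator (fun _ => (1 : ℝ)) (X k ω) :=
        (measurable_const.indicator (measurableSet_secI K)).comp (past_meas X le_rfl)
      have := markov_step hX hM (k := k) (by omega)
        (B := fun ω => B ω * (secI K).indicator (fun _ => (1 : ℝ)) (X k ω))
        (hBm.mul hI) ⟨D, fun ω => by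
          rw [abs_mul]
          refine (mul_le_of_le_one_right (abs_nonneg _) ?_).trans (hD ω)
          by_cases h : X k ω ∈ secI K <;> simp [h]⟩
        (g := (secJ K).indicator fun _ => (1 : ℝ))
        (measurable_const.indicator (measurableSet_secJ K))
        ⟨1, fun y => by by_cases h : y ∈ secJ K <;> simp [h]⟩
      simp_rw [indC_eq, pK, ← mul_assoc]
      rw [this]
      congr 1
      funext ω
      rw [mul_assoc, ← integral_const_mul]
      congr 2
      funext y
      rw [indC_eq, mul_assoc]
    have e1 : ∀ ω, Real.exp (∑ i ∈ Finset.range (k + 1), incr s S κ c (X i ω) (X (i + 1) ω))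
        = B ω + ∑ a ∈ S, (Real.exp (c a) - 1) * (B ω * indC d (κ a) (X k ω, X (k + 1) ω)) := by
      intro ω
      rw [Finset.sum_range_succ, Real.exp_add]
      rw [show incr s S κ c (X k ω) (X (k + 1) ω)
        = ∑ a ∈ S, c a * indC d (κ a) (X k ω, X (k + 1) ω) + (-Q (X k ω)) from sub_eq_add_neg _ _]
      rw [Real.exp_add, exp_sum_ind hdisj]
      simp only [hB, hG]
      rw [Finset.sum_congr rfl fun a _ => mul_left_comm _ _ _, ← Finset.mul_sum]
      ring
    simp_rw [e1]
    rw [integral_add hBi (integrable_finsetSum S fun a _ => (hti (κ a)).const_mul _),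
      integral_finsetSum S fun a _ => (hti (κ a)).const_mul _]
    simp_rw [integral_const_mul, hstep, ← integral_const_mul]
    rw [← integral_finsetSum S fun a _ => (hpi (κ a)).const_mul _,
      ← integral_add hBi (integrable_finsetSum S fun a _ => (hpi (κ a)).const_mul _)]
    refine integral_mono
      (hBi.add (integrable_finsetSum S fun a _ => (hpi (κ a)).const_mul _)) hGi fun ω => ?_
    have h1 : B ω + ∑ a ∈ S, (Real.exp (c a) - 1) * (B ω * pK s (κ a) (X k ω))
        = G ω * (Real.exp (-Q (X k ω)) * (1 + Q (X k ω))) := by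
      rw [Finset.sum_congr rfl fun a _ => mul_left_comm _ _ _, ← Finset.mul_sum]
      simp only [hB, hQ]
      ring
    have h2 : Real.exp (-Q (X k ω)) * (1 + Q (X k ω)) ≤ 1 := by
      have := Real.add_one_le_exp (Q (X k ω))
      calc _ ≤ Real.exp (-Q (X k ω)) * Real.exp (Q (X k ω)) :=
            mul_le_mul_of_nonneg_left (by linarith) (Real.exp_pos _).le
        _ = 1 := by rw [← Real.exp_add]; simp
    simp only
    rw [h1]
    exact mul_le_of_le_one_right (Real.exp_pos _).le h2

lemma sum_Wst_eq (s : (Fin d → ℝ) → (Fin d → ℝ) → ℝ) (n : ℕ) (X : ℕ → Ω → (Fin d → ℝ))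
    {ι : Type} (S : Finset ι) (κ : ι → CubeIdx d) (v : ι → ℝ × ℝ) (ω : Ω) :
    ∑ a ∈ S, Wst s n X (κ a) (v a).1 (v a).2 ω
      = ∑ i ∈ Finset.range n,
        incr s S κ (fun a => cc (v a).1 (v a).2 / 12) (X i ω) (X (i + 1) ω) := by
  unfold Wst incr Nsum Psum pK
  rw [Finset.sum_sub_distrib, Finset.sum_sub_distrib]
  congr 1
  · simp_rw [Finset.mul_sum]; exact Finset.sum_comm
  · simp_rw [Finset.mul_sum]; exact Finset.sum_comm

/-! ### The simultaneous deviation bound -/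

/-- Weighted sum of the exponential supermartingales on the cube `K` over all pairs of possible
values of the estimators. -/
def Ysum (s : (Fin d → ℝ) → (Fin d → ℝ) → ℝ) (n : ℕ) (X : ℕ → Ω → (Fin d → ℝ))
    (K : CubeIdx d) (ω : Ω) : ℝ :=
  ∑ v ∈ valSet d n ×ˢ valSet d n, ((n : ℝ) ^ 8)⁻¹ * Real.exp (Wst s n X K v.1 v.2 ω)

/-- Sum over all dyadic partitions of the products of the local sums. -/
def Zsum (s : (Fin d → ℝ) → (Fin d → ℝ) → ℝ) (n ℓ : ℕ) (X : ℕ → Ω → (Fin d → ℝ))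
    (ω : Ω) : ℝ :=
  ∑ m ∈ parts d ℓ (rootC d), ∏ K ∈ m, Ysum s n X K ω

lemma Ysum_nonneg (s : (Fin d → ℝ) → (Fin d → ℝ) → ℝ) (n : ℕ) (X : ℕ → Ω → (Fin d → ℝ))
    (K : CubeIdx d) (ω : Ω) : 0 ≤ Ysum s n X K ω :=
  Finset.sum_nonneg fun _ _ => mul_nonneg (by positivity) (Real.exp_pos _).le

/-- Expanding the product over the cells of `m` gives a sum over all choices of a pair of values on
each cell. -/
lemma prod_Ysum_eq (s : (Fin d → ℝ) → (Fin d → ℝ) → ℝ) (n : ℕ) (X : ℕ → Ω → (Fin d → ℝ))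
    (m : Finset (CubeIdx d)) (ω : Ω) :
    ∏ K ∈ m, Ysum s n X K ω
      = ∑ p ∈ m.pi fun _ => valSet d n ×ˢ valSet d n, (((n : ℝ) ^ 8)⁻¹) ^ m.card *
        Real.exp (∑ i ∈ Finset.range n, incr s m.attach (fun K => K.1)
          (fun K => cc (p K.1 K.2).1 (p K.1 K.2).2 / 12) (X i ω) (X (i + 1) ω)) := by
  unfold Ysum
  rw [Finset.prod_sum]
  refine Finset.sum_congr rfl fun p _ => ?_
  rw [Finset.prod_mul_distrib, Finset.prod_const, Finset.card_attach, ← Real.exp_sum,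
    sum_Wst_eq s n X m.attach (fun K => K.1) (fun K => p K.1 K.2)]

/-- The weight `n ^ (-8)` absorbs the number of pairs of values and leaves a factor `1 / 4`. -/
lemma card_weight {n : ℕ} (hn : 3 < n) (d : ℕ) :
    ((valSet d n ×ˢ valSet d n).card : ℝ) * ((n : ℝ) ^ 8)⁻¹ ≤ 1 / 4 := by
  have hn' : (4 : ℝ) ≤ n := by exact_mod_cast hn
  have h1 : ((valSet d n).card : ℝ) ≤ ((n : ℝ) + 1) ^ 3 := by exact_mod_cast card_valSet d n
  have h2 : 2 * ((n : ℝ) + 1) ^ 3 ≤ (n : ℝ) ^ 4 := by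
    obtain ⟨t, ht⟩ : ∃ t, (n : ℝ) = t + 4 := ⟨n - 4, by ring⟩
    have ht0 : 0 ≤ t := by linarith
    rw [ht]
    have : 0 ≤ t ^ 4 + 14 * t ^ 3 + 66 * t ^ 2 + 106 * t + 6 := by positivity
    nlinarith
  have h0 : (0 : ℝ) ≤ (valSet d n).card := Nat.cast_nonneg _
  rw [Finset.card_product, ← div_eq_mul_inv, div_le_iff₀ (by positivity)]
  push_cast
  have h3 : 2 * ((valSet d n).card : ℝ) ≤ (n : ℝ) ^ 4 := by linarith
  have := mul_self_le_mul_self (by positivity) h3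
  nlinarith

lemma integrable_expG [MeasurableSpace Ω] {P : Measure Ω} [IsProbabilityMeasure P]
    {X : ℕ → Ω → (Fin d → ℝ)} (hX : ∀ i, Measurable (X i))
    {s : (Fin d → ℝ) → (Fin d → ℝ) → ℝ} (hsm : Measurable (Function.uncurry s))
    (hs0 : ∀ x y, 0 ≤ s x y) (hs1 : ∀ x, ∫ y, s x y = 1)
    {ι : Type} (S : Finset ι) (κ : ι → CubeIdx d) (c : ι → ℝ) (k : ℕ) :
    Integrable (fun ω =>
      Real.exp (∑ i ∈ Finset.range k, incr s S κ c (X i ω) (X (i + 1) ω))) P :=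
  integrable_of_abs_le ((measurable_expG hsm S κ c k).mono (past_le hX k) le_rfl)
    (bounded_expG hs0 hs1 X S κ c k)

lemma integrable_prod_Ysum [MeasurableSpace Ω] {P : Measure Ω} [IsProbabilityMeasure P]
    {X : ℕ → Ω → (Fin d → ℝ)} (hX : ∀ i, Measurable (X i))
    {s : (Fin d → ℝ) → (Fin d → ℝ) → ℝ} (hsm : Measurable (Function.uncurry s))
    (hs0 : ∀ x y, 0 ≤ s x y) (hs1 : ∀ x, ∫ y, s x y = 1) (n : ℕ) (m : Finset (CubeIdx d)) :
    Integrable (fun ω => ∏ K ∈ m, Ysum s n X K ω) P := by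
  simp_rw [prod_Ysum_eq]
  exact integrable_finsetSum _ fun p _ => (integrable_expG hX hsm hs0 hs1 _ _ _ _).const_mul _

lemma integral_Zsum_le [MeasurableSpace Ω] {P : Measure Ω} [IsProbabilityMeasure P]
    (hd : 0 < d) {n : ℕ} (hn : 3 < n) {X : ℕ → Ω → (Fin d → ℝ)} (hX : ∀ i, Measurable (X i))
    {s : (Fin d → ℝ) → (Fin d → ℝ) → ℝ} (hsm : Measurable (Function.uncurry s))
    (hs0 : ∀ x y, 0 ≤ s x y) (hs1 : ∀ x, ∫ y, s x y = 1) (hM : IsMarkov P n X s) (ℓ : ℕ) :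
    ∫ ω, Zsum s n ℓ X ω ∂P ≤ 1 := by
  unfold Zsum
  rw [integral_finsetSum _ fun m _ => integrable_prod_Ysum hX hsm hs0 hs1 n m]
  refine le_trans (Finset.sum_le_sum fun m hm => ?_)
    ((sum_parts_le hd ℓ (rootC d) root_valid).trans (by norm_num))
  have hp := IsPartOf.props (isPart_of_mem hm) root_valid
  simp_rw [prod_Ysum_eq]
  rw [integral_finsetSum _ fun p _ => (integrable_expG hX hsm hs0 hs1 _ _ _ _).const_mul _]
  simp_rw [integral_const_mul]
  calc _ ≤ ∑ p ∈ m.pi fun _ => valSet d n ×ˢ valSet d n, (((n : ℝ) ^ 8)⁻¹) ^ m.card := by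
        refine Finset.sum_le_sum fun p _ => mul_le_of_le_one_right (by positivity) ?_
        refine supermartingale hX hsm hs0 hs1 hM ?_ _ n le_rfl
        intro a _ b _ z hza hzb
        exact Subtype.ext (hp.disj a.1 a.2 b.1 b.2 z hza hzb)
    _ = (((valSet d n ×ˢ valSet d n).card : ℝ) * ((n : ℝ) ^ 8)⁻¹) ^ m.card := by
        rw [Finset.sum_const, Finset.card_pi, Finset.prod_const, nsmul_eq_mul, mul_pow]
        push_cast
        rfl
    _ ≤ (1 / 4 : ℝ) ^ m.card := pow_le_pow_left₀ (by positivity) (card_weight hn d) _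

/-- Markov's inequality for the sum of all the exponential supermartingales. -/
lemma deviation [MeasurableSpace Ω] {P : Measure Ω} [IsProbabilityMeasure P]
    (hd : 0 < d) {n : ℕ} (hn : 3 < n) {X : ℕ → Ω → (Fin d → ℝ)} (hX : ∀ i, Measurable (X i))
    {s : (Fin d → ℝ) → (Fin d → ℝ) → ℝ} (hsm : Measurable (Function.uncurry s))
    (hs0 : ∀ x y, 0 ≤ s x y) (hs1 : ∀ x, ∫ y, s x y = 1) (hM : IsMarkov P n X s) (ℓ : ℕ)
    (t : ℝ) :
    P {ω | Real.exp t ≤ Zsum s n ℓ X ω} ≤ ENNReal.ofReal (Real.exp (-t)) := by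
  have hi : Integrable (Zsum s n ℓ X) P :=
    integrable_finsetSum _ fun m _ => integrable_prod_Ysum hX hsm hs0 hs1 n m
  have h := mul_meas_ge_le_integral_of_nonneg (μ := P) (f := Zsum s n ℓ X)
    (Filter.Eventually.of_forall fun ω => Finset.sum_nonneg fun m _ =>
      Finset.prod_nonneg fun K _ => Ysum_nonneg s n X K ω) hi (Real.exp t)
  have h2 := h.trans (integral_Zsum_le hd hn hX hsm hs0 hs1 hM ℓ)
  have h3 : P.real {ω | Real.exp t ≤ Zsum s n ℓ X ω} ≤ Real.exp (-t) := by
    rw [Real.exp_neg, ← one_div, le_div_iff₀ (Real.exp_pos t)]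
    linarith
  rw [← ENNReal.ofReal_toReal (measure_ne_top P _)]
  exact ENNReal.ofReal_le_ofReal h3

/-- Outside the deviation event, the fluctuations on all cells of all partitions are controlled
by `8 log n` per cell. -/
lemma fluct_bound {s : (Fin d → ℝ) → (Fin d → ℝ) → ℝ} {n : ℕ} (hn : 0 < n) {ℓ : ℕ}
    {X : ℕ → Ω → (Fin d → ℝ)} {ω : Ω} {t : ℝ} (hω : Zsum s n ℓ X ω < Real.exp t)
    {m : Finset (CubeIdx d)} (hm : IsPartOf d ℓ (rootC d) m) {v : CubeIdx d → ℝ × ℝ}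
    (hv : ∀ K ∈ m, v K ∈ valSet d n ×ˢ valSet d n) :
    ∑ K ∈ m, Wst s n X K (v K).1 (v K).2 ω ≤ 8 * Real.log n * m.card + t := by
  have hn' : (0 : ℝ) < n := by exact_mod_cast hn
  have h1 : ∏ K ∈ m, Ysum s n X K ω ≤ Zsum s n ℓ X ω :=
    Finset.single_le_sum (f := fun m => ∏ K ∈ m, Ysum s n X K ω)
      (fun m _ => Finset.prod_nonneg fun K _ => Ysum_nonneg s n X K ω) (mem_parts_of hm)
  have h2 : Real.exp (∑ K ∈ m, (Wst s n X K (v K).1 (v K).2 ω - 8 * Real.log n))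
      ≤ ∏ K ∈ m, Ysum s n X K ω := by
    rw [Real.exp_sum]
    refine Finset.prod_le_prod (fun _ _ => (Real.exp_pos _).le) fun K hK => ?_
    have : Real.exp (Wst s n X K (v K).1 (v K).2 ω - 8 * Real.log n)
        = ((n : ℝ) ^ 8)⁻¹ * Real.exp (Wst s n X K (v K).1 (v K).2 ω) := by
      rw [Real.exp_sub, show (8 : ℝ) * Real.log n = ((8 : ℕ) : ℝ) * Real.log n by norm_num,
        Real.exp_nat_mul, Real.exp_log hn', div_eq_inv_mul]
    rw [this]
    exact Finset.single_le_sum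
      (f := fun v : ℝ × ℝ => ((n : ℝ) ^ 8)⁻¹ * Real.exp (Wst s n X K v.1 v.2 ω))
      (fun _ _ => mul_nonneg (by positivity) (Real.exp_pos _).le) (hv K hK)
  have h3 := Real.exp_lt_exp.1 ((h2.trans h1).trans_lt hω)
  rw [Finset.sum_sub_distrib, Finset.sum_const, nsmul_eq_mul] at h3
  linarith

end DyadicSel
end

noncomputable section
open Classical

namespace DyadicSel

variable {d : ℕ} {Ω : Type}

/-! ### Histograms on partitions and their restrictions -/

lemma hist_eq_of_mem {ℓ : ℕ} {R : CubeIdx d} {m : Finset (CubeIdx d)} (hp : PartProps ℓ R m)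
    (n : ℕ) (X : ℕ → Ω → (Fin d → ℝ)) (ω : Ω) {K : CubeIdx d} (hK : K ∈ m)
    {z : (Fin d → ℝ) × (Fin d → ℝ)} (hz : pairPt d z.1 z.2 ∈ cubeSet d K) :
    histEst d n X m ω z = val n X K ω := by
  rw [histEst_def]
  simp only
  rw [Finset.sum_eq_single_of_mem K hK fun K' hK' hne => ?_, indC_of_mem hz, mul_one]
  rw [indC_of_notMem fun h => hne (hp.disj K' hK' K hK _ h hz), mul_zero]

lemma hist_eq_zero {ℓ : ℕ} {R : CubeIdx d} {m : Finset (CubeIdx d)} (hp : PartProps ℓ R m)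
    (n : ℕ) (X : ℕ → Ω → (Fin d → ℝ)) (ω : Ω)
    {z : (Fin d → ℝ) × (Fin d → ℝ)} (hz : pairPt d z.1 z.2 ∉ cubeSet d R) :
    histEst d n X m ω z = 0 := by
  rw [histEst_def]
  exact Finset.sum_eq_zero fun K hK => by
    rw [indC_of_notMem fun h => hz (hp.sub K hK h), mul_zero]

lemma hist_nonneg (n : ℕ) (X : ℕ → Ω → (Fin d → ℝ)) (m : Finset (CubeIdx d)) (ω : Ω)
    (z : (Fin d → ℝ) × (Fin d → ℝ)) : 0 ≤ histEst d n X m ω z := by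
  rw [histEst_def]
  exact Finset.sum_nonneg fun K _ => mul_nonneg (val_nonneg n X K ω) (indC_nonneg K z)

lemma measurable_hist (n : ℕ) (X : ℕ → Ω → (Fin d → ℝ)) (m : Finset (CubeIdx d)) (ω : Ω)
    (x : Fin d → ℝ) : Measurable fun y => histEst d n X m ω (x, y) := by
  simp only [histEst_def]
  exact Finset.measurable_sum _ fun K _ => (measurable_indC_right K x).const_mul _

lemma integrable_hist (n : ℕ) (X : ℕ → Ω → (Fin d → ℝ)) (m : Finset (CubeIdx d)) (ω : Ω)
    (x : Fin d → ℝ) : Integrable fun y => histEst d n X m ω (x, y) := by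
  simp only [histEst_def]
  exact integrable_finsetSum _ fun K _ => (integrable_indC K x).const_mul _

lemma restr2_comm (f : (Fin d → ℝ) × (Fin d → ℝ) → ℝ) (K K' : CubeIdx d) :
    restr2 d f K K' = restr2 d f K' K := by
  funext p; simp only [restr2]; ring

lemma restr2_hist_left {ℓ : ℕ} {R : CubeIdx d} {m : Finset (CubeIdx d)} (hp : PartProps ℓ R m)
    (n : ℕ) (X : ℕ → Ω → (Fin d → ℝ)) (ω : Ω) {K K' : CubeIdx d} (hK : K ∈ m)
    (hsub : cubeSet d K' ⊆ cubeSet d K) :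
    restr2 d (histEst d n X m ω) K K' = fun p => val n X K ω * indC d K' p := by
  funext p
  by_cases h : pairPt d p.1 p.2 ∈ cubeSet d K'
  · simp only [restr2]
    rw [hist_eq_of_mem hp n X ω hK (hsub h), indC_of_mem (hsub h), indC_of_mem h, mul_one]
  · simp only [restr2, indC_of_notMem h, mul_zero]

lemma restr2_hist_right {ℓ : ℕ} {R : CubeIdx d} {m : Finset (CubeIdx d)} (hp : PartProps ℓ R m)
    (n : ℕ) (X : ℕ → Ω → (Fin d → ℝ)) (ω : Ω) {K K' : CubeIdx d} (hK : K ∈ m)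
    (hsub : cubeSet d K ⊆ cubeSet d K') :
    restr2 d (histEst d n X m ω) K K' = fun p => val n X K ω * indC d K p := by
  funext p
  by_cases h : pairPt d p.1 p.2 ∈ cubeSet d K
  · simp only [restr2]
    rw [hist_eq_of_mem hp n X ω hK h, indC_of_mem (hsub h), indC_of_mem h, mul_one, mul_one]
  · simp only [restr2, indC_of_notMem h, mul_zero, zero_mul]

lemma restr2_disjoint (f : (Fin d → ℝ) × (Fin d → ℝ) → ℝ) {K K' : CubeIdx d}
    (h : ¬ (cubeSet d K' ∩ cubeSet d K).Nonempty) :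
    restr2 d f K K' = fun p => 0 * indC d K p := by
  funext p
  simp only [restr2, zero_mul]
  by_cases h1 : pairPt d p.1 p.2 ∈ cubeSet d K
  · rw [indC_of_notMem fun h2 => h ⟨_, h2, h1⟩, mul_zero]
  · rw [indC_of_notMem h1, mul_zero, zero_mul]

/-- The contribution of the cell `K ∩ K₁` to the selection criterion. -/
def cellTest (d n : ℕ) (X : ℕ → Ω → (Fin d → ℝ)) (ω : Ω)
    (f g : (Fin d → ℝ) × (Fin d → ℝ) → ℝ) (K K₁ : CubeIdx d) : ℝ :=
  alphaC * hellSq d n X ω (restr2 d f K K₁) (restr2 d g K K₁)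
    + Tstat d n X ω (restr2 d f K K₁) (restr2 d g K K₁)

/-- The same quantity for the constants `v` and `v'` on the cube `K`. -/
def constTest (d n : ℕ) (X : ℕ → Ω → (Fin d → ℝ)) (ω : Ω) (K : CubeIdx d) (v v' : ℝ) : ℝ :=
  alphaC * hellSq d n X ω (fun p => v * indC d K p) (fun p => v' * indC d K p)
    + Tstat d n X ω (fun p => v * indC d K p) (fun p => v' * indC d K p)

lemma cellTest_disjoint (n : ℕ) (X : ℕ → Ω → (Fin d → ℝ)) (ω : Ω)
    (f g : (Fin d → ℝ) × (Fin d → ℝ) → ℝ) {K K' : CubeIdx d}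
    (h : ¬ (cubeSet d K' ∩ cubeSet d K).Nonempty) : cellTest d n X ω f g K K' = 0 := by
  unfold cellTest
  rw [restr2_disjoint f h, restr2_disjoint g h, hellSq_const, Tstat_const]
  simp [cc]

lemma hellSq_comm (n : ℕ) (X : ℕ → Ω → (Fin d → ℝ)) (ω : Ω)
    (f g : (Fin d → ℝ) × (Fin d → ℝ) → ℝ) : hellSq d n X ω f g = hellSq d n X ω g f := by
  unfold hellSq
  congr 1
  refine Finset.sum_congr rfl fun i _ => ?_
  congr 1
  funext y
  ring

lemma Tstat_antisymm (n : ℕ) (X : ℕ → Ω → (Fin d → ℝ)) (ω : Ω)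
    (f g : (Fin d → ℝ) × (Fin d → ℝ) → ℝ) : Tstat d n X ω f g = - Tstat d n X ω g f := by
  unfold Tstat
  rw [neg_add, neg_add, ← mul_neg, ← mul_neg, ← mul_neg, ← Finset.sum_neg_distrib,
    ← Finset.sum_neg_distrib, ← Finset.sum_neg_distrib]
  congr 1
  · congr 1
    · congr 1
      refine Finset.sum_congr rfl fun i _ => ?_
      rw [← integral_neg]
      congr 1
      funext y
      rw [add_comm (f _)]
      ring
    · congr 1
      refine Finset.sum_congr rfl fun i _ => ?_
      rw [add_comm (f _)]
      ring
  · congr 1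
    refine Finset.sum_congr rfl fun i _ => ?_
    rw [← integral_neg]
    congr 1
    funext y
    ring

lemma cellTest_add_swap (n : ℕ) (X : ℕ → Ω → (Fin d → ℝ)) (ω : Ω)
    (f g : (Fin d → ℝ) × (Fin d → ℝ) → ℝ) (K K' : CubeIdx d) :
    cellTest d n X ω f g K K' + cellTest d n X ω g f K' K
      = 2 * alphaC * hellSq d n X ω (restr2 d f K K') (restr2 d g K K') := by
  unfold cellTest
  rw [restr2_comm g K' K, restr2_comm f K' K, hellSq_comm n X ω (restr2 d g K K'),
    Tstat_antisymm n X ω (restr2 d g K K')]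
  ring

/-! ### Hellinger-type distances -/

lemma measurable_sIndA {s : (Fin d → ℝ) → (Fin d → ℝ) → ℝ}
    (hsm : Measurable (Function.uncurry s)) (x : Fin d → ℝ) :
    Measurable fun y => sIndA d s (x, y) := by
  have h : Measurable (sIndA d s) :=
    Measurable.indicator hsm (measurableSet_Icc.prod measurableSet_Icc)
  exact h.comp measurable_prodMk_left

lemma sIndA_nonneg {s : (Fin d → ℝ) → (Fin d → ℝ) → ℝ} (hs0 : ∀ x y, 0 ≤ s x y)
    (z : (Fin d → ℝ) × (Fin d → ℝ)) : 0 ≤ sIndA d s z :=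
  Set.indicator_nonneg (fun _ _ => hs0 _ _) _

lemma integrable_sIndA {s : (Fin d → ℝ) → (Fin d → ℝ) → ℝ}
    (hsm : Measurable (Function.uncurry s)) (hs0 : ∀ x y, 0 ≤ s x y)
    (hs1 : ∀ x, ∫ y, s x y = 1) (x : Fin d → ℝ) : Integrable fun y => sIndA d s (x, y) := by
  refine Integrable.mono' (integrable_s hs1 x) (measurable_sIndA hsm x).aestronglyMeasurable
    (Filter.Eventually.of_forall fun y => ?_)
  rw [Real.norm_eq_abs, abs_of_nonneg (sIndA_nonneg hs0 _)]
  exact Set.indicator_le_self' (fun _ _ => hs0 _ _) _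

lemma hellSq_nonneg (n : ℕ) (X : ℕ → Ω → (Fin d → ℝ)) (ω : Ω)
    (f g : (Fin d → ℝ) × (Fin d → ℝ) → ℝ) : 0 ≤ hellSq d n X ω f g :=
  mul_nonneg (by positivity) (Finset.sum_nonneg fun _ _ => integral_nonneg fun _ => sq_nonneg _)

/-- Relaxed triangle inequality for the squared distance. -/
lemma hellSq_triangle {s : (Fin d → ℝ) → (Fin d → ℝ) → ℝ}
    (hsm : Measurable (Function.uncurry s)) (hs0 : ∀ x y, 0 ≤ s x y)
    (hs1 : ∀ x, ∫ y, s x y = 1) (n : ℕ) (X : ℕ → Ω → (Fin d → ℝ)) (ω : Ω)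
    (m m' : Finset (CubeIdx d)) :
    hellSq d n X ω (sIndA d s) (histEst d n X m' ω)
      ≤ 2 * hellSq d n X ω (sIndA d s) (histEst d n X m ω)
        + 2 * hellSq d n X ω (histEst d n X m ω) (histEst d n X m' ω) := by
  have key : ∀ i, (∫ y, (Real.sqrt (sIndA d s (X i ω, y))
        - Real.sqrt (histEst d n X m' ω (X i ω, y))) ^ 2)
      ≤ 2 * (∫ y, (Real.sqrt (sIndA d s (X i ω, y))
        - Real.sqrt (histEst d n X m ω (X i ω, y))) ^ 2)
      + 2 * (∫ y, (Real.sqrt (histEst d n X m ω (X i ω, y))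
        - Real.sqrt (histEst d n X m' ω (X i ω, y))) ^ 2) := by
    intro i
    have h1 := integrable_sq_sqrt (integrable_sIndA hsm hs0 hs1 (X i ω))
      (integrable_hist n X m ω (X i ω)) (measurable_sIndA hsm _) (measurable_hist n X m ω _)
      (fun _ => sIndA_nonneg hs0 _) (fun _ => hist_nonneg n X m ω _)
    have h2 := integrable_sq_sqrt (integrable_hist n X m ω (X i ω))
      (integrable_hist n X m' ω (X i ω)) (measurable_hist n X m ω _) (measurable_hist n X m' ω _)
      (fun _ => hist_nonneg n X m ω _) (fun _ => hist_nonneg n X m' ω _)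
    rw [← integral_const_mul, ← integral_const_mul,
      ← integral_add (h1.const_mul 2) (h2.const_mul 2)]
    refine integral_mono_of_nonneg (Filter.Eventually.of_forall fun _ => sq_nonneg _)
      ((h1.const_mul 2).add (h2.const_mul 2)) (Filter.Eventually.of_forall fun y => ?_)
    simp only
    nlinarith [sq_nonneg (Real.sqrt (sIndA d s (X i ω, y))
      - 2 * Real.sqrt (histEst d n X m ω (X i ω, y)) + Real.sqrt (histEst d n X m' ω (X i ω, y)))]
  have hsum := Finset.sum_le_sum fun i (_ : i ∈ Finset.range n) => key i
  rw [Finset.sum_add_distrib, ← Finset.mul_sum, ← Finset.mul_sum] at hsum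
  have h0 : (0 : ℝ) ≤ 1 / (2 * n) := by positivity
  have := mul_le_mul_of_nonneg_left hsum h0
  unfold hellSq
  linarith

/-- Summing the local losses over the cells of a refinement recovers at most the global loss. -/
lemma sum_hs_le {s : (Fin d → ℝ) → (Fin d → ℝ) → ℝ}
    (hsm : Measurable (Function.uncurry s)) (hs0 : ∀ x y, 0 ≤ s x y)
    (hs1 : ∀ x, ∫ y, s x y = 1) (n : ℕ) (X : ℕ → Ω → (Fin d → ℝ)) (ω : Ω)
    {ℓ ℓ' : ℕ} {m m' : Finset (CubeIdx d)} (hp : PartProps ℓ (rootC d) m)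
    (hp' : PartProps ℓ' (rootC d) m') (w : CubeIdx d → ℝ)
    (hw : ∀ c ∈ m', ∃ K ∈ m, cubeSet d c ⊆ cubeSet d K ∧ w c = val n X K ω) :
    ∑ c ∈ m', hs s n X c (w c) ω ≤ hellSq d n X ω (sIndA d s) (histEst d n X m ω) := by
  have hw0 : ∀ c ∈ m', 0 ≤ w c := fun c hc => by
    obtain ⟨K, -, -, h⟩ := hw c hc
    rw [h]; exact val_nonneg n X K ω
  unfold hs hellSq
  rw [← Finset.mul_sum, Finset.sum_comm]
  refine mul_le_mul_of_nonneg_left (Finset.sum_le_sum fun i _ => ?_) (by positivity)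
  have hterm := fun c (hc : c ∈ m') => integrable_hs_term hsm hs0 hs1 c (hw0 c hc) (X i ω)
  rw [← integral_finsetSum _ hterm]
  have hterm2 := integrable_sq_sqrt (integrable_sIndA hsm hs0 hs1 (X i ω))
      (integrable_hist n X m ω (X i ω)) (measurable_sIndA hsm _) (measurable_hist n X m ω _)
      (fun _ => sIndA_nonneg hs0 _) (fun _ => hist_nonneg n X m ω _)
  refine integral_mono (integrable_finsetSum _ hterm) hterm2 fun y => ?_
  simp only
  by_cases h : ∃ c ∈ m', pairPt d (X i ω) y ∈ cubeSet d c
  · obtain ⟨c, hc, hz⟩ := h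
    obtain ⟨K, hK, hcK, hwc⟩ := hw c hc
    rw [Finset.sum_eq_single_of_mem c hc fun c' hc' hne => ?_]
    · rw [indC_of_mem (z := (X i ω, y)) hz, hwc,
        hist_eq_of_mem hp n X ω hK (z := (X i ω, y)) (hcK hz)]
      have : (X i ω, y) ∈ unitSq d := (pair_mem_root _ _).1 (hp'.sub c hc hz)
      rw [sIndA, Set.indicator_of_mem this, one_mul]
    · rw [indC_of_notMem (z := (X i ω, y)) fun h => hne (hp'.disj c' hc' c hc _ h hz), zero_mul]
  · push Not at h
    rw [Finset.sum_eq_zero fun c hc => by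
      rw [indC_of_notMem (z := (X i ω, y)) (h c hc), zero_mul]]
    exact sq_nonneg _

lemma measurable_restr2 (n : ℕ) (X : ℕ → Ω → (Fin d → ℝ)) (m : Finset (CubeIdx d)) (ω : Ω)
    (K K' : CubeIdx d) (x : Fin d → ℝ) :
    Measurable fun y => restr2 d (histEst d n X m ω) K K' (x, y) :=
  ((measurable_hist n X m ω x).mul (measurable_indC_right K x)).mul (measurable_indC_right K' x)

lemma restr2_nonneg (n : ℕ) (X : ℕ → Ω → (Fin d → ℝ)) (m : Finset (CubeIdx d)) (ω : Ω)
    (K K' : CubeIdx d) (z : (Fin d → ℝ) × (Fin d → ℝ)) :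
    0 ≤ restr2 d (histEst d n X m ω) K K' z :=
  mul_nonneg (mul_nonneg (hist_nonneg n X m ω z) (indC_nonneg K z)) (indC_nonneg K' z)

lemma integrable_restr2 (n : ℕ) (X : ℕ → Ω → (Fin d → ℝ)) (m : Finset (CubeIdx d)) (ω : Ω)
    (K K' : CubeIdx d) (x : Fin d → ℝ) :
    Integrable fun y => restr2 d (histEst d n X m ω) K K' (x, y) := by
  have h := Integrable.indC_mul (Integrable.indC_mul (integrable_hist n X m ω x) K x) K' x
  refine h.congr (Filter.Eventually.of_forall fun y => ?_)
  simp only [restr2]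
  ring

/-- The cells `K ∩ K'` carry the whole distance between two histograms. -/
lemma hellSq_le_sum {ℓ ℓ' : ℕ} {m m' : Finset (CubeIdx d)} (hp : PartProps ℓ (rootC d) m)
    (hp' : PartProps ℓ' (rootC d) m') (n : ℕ) (X : ℕ → Ω → (Fin d → ℝ)) (ω : Ω) :
    hellSq d n X ω (histEst d n X m ω) (histEst d n X m' ω)
      ≤ ∑ K ∈ m, ∑ K' ∈ m', hellSq d n X ω (restr2 d (histEst d n X m ω) K K')
        (restr2 d (histEst d n X m' ω) K K') := by
  rw [← Finset.sum_product']
  unfold hellSq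
  rw [← Finset.mul_sum, Finset.sum_comm]
  refine mul_le_mul_of_nonneg_left (Finset.sum_le_sum fun i _ => ?_) (by positivity)
  have hterm := fun p (_ : p ∈ m ×ˢ m') =>
    integrable_sq_sqrt (integrable_restr2 n X m ω p.1 p.2 (X i ω))
      (integrable_restr2 n X m' ω p.1 p.2 (X i ω)) (measurable_restr2 n X m ω p.1 p.2 (X i ω))
      (measurable_restr2 n X m' ω p.1 p.2 (X i ω)) (fun _ => restr2_nonneg n X m ω _ _ _)
      (fun _ => restr2_nonneg n X m' ω _ _ _)
  rw [← integral_finsetSum _ hterm]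
  refine integral_mono_of_nonneg (Filter.Eventually.of_forall fun _ => sq_nonneg _)
    (integrable_finsetSum _ hterm) (Filter.Eventually.of_forall fun y => ?_)
  simp only
  by_cases h : pairPt d (X i ω) y ∈ cubeSet d (rootC d)
  · obtain ⟨K, hK, hz⟩ := hp.cover _ h
    obtain ⟨K', hK', hz'⟩ := hp'.cover _ h
    have := Finset.single_le_sum (f := fun p : CubeIdx d × CubeIdx d =>
      (Real.sqrt (restr2 d (histEst d n X m ω) p.1 p.2 (X i ω, y))
        - Real.sqrt (restr2 d (histEst d n X m' ω) p.1 p.2 (X i ω, y))) ^ 2)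
      (s := m ×ˢ m') (fun _ _ => sq_nonneg _) (a := (K, K')) (Finset.mk_mem_product hK hK')
    refine le_trans (le_of_eq ?_) this
    simp only [restr2, indC_of_mem (z := (X i ω, y)) hz, indC_of_mem (z := (X i ω, y)) hz', mul_one]
  · rw [hist_eq_zero hp n X ω (z := (X i ω, y)) h, hist_eq_zero hp' n X ω (z := (X i ω, y)) h]
    simp only [sub_self, ne_eq, OfNat.ofNat_ne_zero, not_false_eq_true, zero_pow]
    exact Finset.sum_nonneg fun _ _ => sq_nonneg _

end DyadicSel
end

noncomputable section
open Classical

namespace DyadicSel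

variable {d : ℕ} {Ω : Type}

/-! ### Counting the pieces of a partition inside a cube -/

/-- Cells of `m'` that are strictly finer than `K` and meet it. -/
def finer (m' : Finset (CubeIdx d)) (K : CubeIdx d) : Finset (CubeIdx d) :=
  m'.filter fun c => (cubeSet d c ∩ cubeSet d K).Nonempty ∧ K.1 < c.1

/-- If a cell of `m'` at least as coarse as the cell `K` meets `K`, then it contains `K` and is the
only cell of `m'` that meets `K`. -/
lemma unique_coarser {ℓ ℓ' : ℕ} {R R' : CubeIdx d} {m m' : Finset (CubeIdx d)}
    (hp : PartProps ℓ R m) (hp' : PartProps ℓ' R' m') {K K₀ : CubeIdx d} (hK : K ∈ m)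
    (hK₀ : K₀ ∈ m') (hmeet : (cubeSet d K₀ ∩ cubeSet d K).Nonempty) (hle : K₀.1 ≤ K.1) :
    cubeSet d K ⊆ cubeSet d K₀ ∧
      ∀ K' ∈ m', (cubeSet d K' ∩ cubeSet d K).Nonempty → K' = K₀ := by
  obtain ⟨z, hz₀, hz⟩ := hmeet
  have hsub := nested (hp'.valid K₀ hK₀) (hp.valid K hK) hz₀ hz hle
  refine ⟨hsub, fun K' hK' ⟨w, hw', hw⟩ => hp'.disj K' hK' K₀ hK₀ w hw' (hsub hw)⟩

lemma veeCard_le {ℓ ℓ' : ℕ} {R R' : CubeIdx d} {m m' : Finset (CubeIdx d)}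
    (hp : PartProps ℓ R m) (hp' : PartProps ℓ' R' m') {K : CubeIdx d} (hK : K ∈ m) :
    veeCard d m' K ≤ 1 + (finer m' K).card := by
  refine Finset.card_image_le.trans ?_
  by_cases h : ∃ K₀ ∈ m', (cubeSet d K₀ ∩ cubeSet d K).Nonempty ∧ K₀.1 ≤ K.1
  · obtain ⟨K₀, hK₀, hmeet, hle⟩ := h
    have hu := (unique_coarser hp hp' hK hK₀ hmeet hle).2
    refine le_trans (Finset.card_le_one.2 fun a ha b hb => ?_) (Nat.le_add_right _ _)
    rw [Finset.mem_filter] at ha hb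
    rw [hu a ha.1 ha.2, hu b hb.1 hb.2]
  · push Not at h
    refine le_trans (Finset.card_le_card fun K' hK' => ?_) (Nat.le_add_left _ _)
    rw [Finset.mem_filter] at hK'
    exact Finset.mem_filter.2 ⟨hK'.1, hK'.2, h K' hK'.1 hK'.2⟩

/-- A cell meets either a single coarser cell of `m'` or only strictly finer ones, and each cell of
`m'` is finer than at most one cell of `m`. -/
lemma sum_veeCard_le {ℓ ℓ' : ℕ} {R R' : CubeIdx d} {m m' : Finset (CubeIdx d)}
    (hp : PartProps ℓ R m) (hp' : PartProps ℓ' R' m') :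
    ∑ K ∈ m, veeCard d m' K ≤ m.card + m'.card := by
  have hdisj : Set.PairwiseDisjoint (↑m) (finer m') := by
    intro K hK K₂ hK₂ hne
    refine Finset.disjoint_left.2 fun K' h h₂ => hne ?_
    simp only [finer, Finset.mem_filter] at h h₂
    obtain ⟨hK', ⟨z, hz', hz⟩, hlt⟩ := h
    obtain ⟨-, ⟨w, hw', hw⟩, hlt₂⟩ := h₂
    have h1 := nested (hp.valid K hK) (hp'.valid K' hK') hz hz' hlt.le
    have h2 := nested (hp.valid K₂ hK₂) (hp'.valid K' hK') hw hw' hlt₂.le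
    exact hp.disj K hK K₂ hK₂ z (h1 hz') (h2 hz')
  calc ∑ K ∈ m, veeCard d m' K ≤ ∑ K ∈ m, (1 + (finer m' K).card) :=
        Finset.sum_le_sum fun K hK => veeCard_le hp hp' hK
    _ = m.card + (m.biUnion (finer m')).card := by
        rw [Finset.sum_add_distrib, Finset.card_biUnion hdisj]; simp
    _ ≤ m.card + m'.card := by
        refine Nat.add_le_add_left (Finset.card_le_card ?_) _
        exact Finset.biUnion_subset.2 fun K _ => Finset.filter_subset _ _

/-! ### Localising a competing partition inside a cell -/

/-- Comparing `m` with `m'` inside a cell `K` of `m` amounts to comparing the constant value on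
`K` with admissible values on the cells of some dyadic partition of `K`, which has no more
cells than `m' ∨ K`. -/
lemma localise {ℓ n : ℕ} (hℓ : ℓ ≤ n) {m m' : Finset (CubeIdx d)}
    (hm : IsPartOf d ℓ (rootC d) m) (hm' : IsPartOf d ℓ (rootC d) m')
    (X : ℕ → Ω → (Fin d → ℝ)) (ω : Ω) {K : CubeIdx d} (hK : K ∈ m) :
    ∃ (g : Finset (CubeIdx d)) (u : CubeIdx d → ℝ),
      IsPartOf d (ℓ + (rootC d).1 - K.1) K g ∧ (∀ c ∈ g, u c ∈ valSet d n) ∧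
      ∑ K' ∈ m', cellTest d n X ω (histEst d n X m ω) (histEst d n X m' ω) K K'
        = ∑ c ∈ g, constTest d n X ω c (val n X K ω) (u c) ∧
      g.card ≤ veeCard d m' K := by
  have hp := IsPartOf.props hm root_valid
  have hp' := IsPartOf.props hm' root_valid
  have hlev : ∀ K' ∈ m', K'.1 ≤ n := fun K' hK' =>
    (hp'.ge K' hK').trans (by simpa [rootC] using hℓ)
  by_cases h : ∃ K₀ ∈ m', (cubeSet d K₀ ∩ cubeSet d K).Nonempty ∧ K₀.1 ≤ K.1
  · obtain ⟨K₀, hK₀, hmeet, hle⟩ := h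
    obtain ⟨hsub, hu⟩ := unique_coarser hp hp' hK hK₀ hmeet hle
    refine ⟨{K}, fun _ => val n X K₀ ω, IsPartOf.leaf _ _, fun _ _ => val_mem X (hlev K₀ hK₀) ω,
      ?_, ?_⟩
    · rw [Finset.sum_singleton, Finset.sum_eq_single_of_mem K₀ hK₀ fun K' hK' hne =>
        cellTest_disjoint n X ω _ _ fun hmeet' => hne (hu K' hK' hmeet')]
      unfold cellTest constTest
      rw [restr2_hist_right hp n X ω hK hsub, restr2_comm _ K K₀,
        restr2_hist_left hp' n X ω hK₀ hsub]
    · rw [Finset.card_singleton]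
      refine Finset.card_pos.2 (Finset.Nonempty.image ⟨K₀, ?_⟩ _)
      exact Finset.mem_filter.2 ⟨hK₀, hmeet⟩
  · push Not at h
    refine ⟨m'.filter fun K' => (cubeSet d K' ∩ cubeSet d K).Nonempty, fun c => val n X c ω,
      ?_, ?_, ?_, ?_⟩
    · exact IsPartOf.restrict hm' (hp.valid K hK) root_valid (hp.le K hK) (hp.sub K hK)
        fun K' hK' hne => (h K' hK' hne).le
    · exact fun c hc => val_mem X (hlev c (Finset.mem_filter.1 hc).1) ω
    · rw [Finset.sum_filter]
      refine Finset.sum_congr rfl fun K' hK' => ?_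
      split_ifs with hne
      · obtain ⟨z, hz', hz⟩ := hne
        have hsub := nested (hp.valid K hK) (hp'.valid K' hK') hz hz' (h K' hK' ⟨z, hz', hz⟩).le
        unfold cellTest constTest
        rw [restr2_hist_left hp n X ω hK hsub, restr2_comm _ K K',
          restr2_hist_right hp' n X ω hK' hsub]
      · exact cellTest_disjoint n X ω _ _ hne
    · refine (Finset.card_image_of_injOn ?_).ge
      intro a ha b hb hab
      simp only [Finset.coe_filter, Set.mem_ofPred_eq] at ha hb
      obtain ⟨z, hz⟩ := ha.2
      have hz2 : z ∈ cubeSet d b ∩ cubeSet d K := by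
        have : cubeSet d a ∩ cubeSet d K = cubeSet d b ∩ cubeSet d K := hab
        rwa [← this]
      exact hp'.disj a ha.1 b hb.1 z hz.1 hz2.1

/-! ### The selection criterion -/

lemma MpartE_coe (d ℓ : ℕ) : MpartE d (ℓ : ℕ∞) = Mpart d ℓ := by
  simp [MpartE]

instance finite_Mpart (d ℓ : ℕ) : Finite (Mpart d ℓ) :=
  Set.Finite.to_subtype ((Finset.finite_toSet (parts d ℓ (rootC d))).subset fun _ hm =>
    mem_parts_of hm)

instance finite_MpartE (d ℓ : ℕ) : Finite (MpartE d (ℓ : ℕ∞)) := by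
  rw [MpartE_coe]; exact finite_Mpart d ℓ

instance nonempty_Mpart (d ℓ : ℕ) : Nonempty (Mpart d ℓ) :=
  ⟨⟨_, IsPartOf.leaf ℓ (rootC d)⟩⟩

instance nonempty_MpartE (d ℓ : ℕ) : Nonempty (MpartE d (ℓ : ℕ∞)) := by
  rw [MpartE_coe]; exact nonempty_Mpart d ℓ

/-- The penalised comparison of `m` with `m'` inside the cell `K`. -/
def cellCrit (d n : ℕ) (X : ℕ → Ω → (Fin d → ℝ)) (L : ℝ) (ω : Ω) (m m' : Finset (CubeIdx d))
    (K : CubeIdx d) : ℝ :=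
  (∑ K' ∈ m', cellTest d n X ω (histEst d n X m ω) (histEst d n X m' ω) K K')
    - penC L n (veeCard d m' K)

lemma gammaSel_eq (n : ℕ) (X : ℕ → Ω → (Fin d → ℝ)) (L : ℝ) (ℓ : ℕ) (ω : Ω)
    (m : Finset (CubeIdx d)) :
    gammaSel d n X L (ℓ : ℕ∞) ω m
      = ∑ K ∈ m, (⨆ m' : MpartE d (ℓ : ℕ∞), cellCrit d n X L ω m m' K)
        + 2 * penC L n m.card := rfl

lemma sum_cellCrit_le (n : ℕ) (X : ℕ → Ω → (Fin d → ℝ)) (L : ℝ) (ℓ : ℕ) (ω : Ω)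
    (m : Finset (CubeIdx d)) {m' : Finset (CubeIdx d)} (hm' : IsPartOf d ℓ (rootC d) m') :
    ∑ K ∈ m, cellCrit d n X L ω m m' K + 2 * penC L n m.card
      ≤ gammaSel d n X L (ℓ : ℕ∞) ω m := by
  rw [gammaSel_eq]
  have hmem : m' ∈ MpartE d (ℓ : ℕ∞) := by rw [MpartE_coe]; exact hm'
  gcongr with K hK
  exact le_ciSup (f := fun m' : MpartE d (ℓ : ℕ∞) => cellCrit d n X L ω m m' K)
    (Set.finite_range _).bddAbove ⟨m', hmem⟩

lemma sum_penC_le {ℓ ℓ' : ℕ} {R R' : CubeIdx d} {m m' : Finset (CubeIdx d)}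
    (hp : PartProps ℓ R m) (hp' : PartProps ℓ' R' m') {L : ℝ} (hL : 0 ≤ L) (n : ℕ) :
    ∑ K ∈ m, penC L n (veeCard d m' K) ≤ penC L n m.card + penC L n m'.card := by
  have h : ((∑ K ∈ m, veeCard d m' K : ℕ) : ℝ) ≤ m.card + m'.card := by
    exact_mod_cast sum_veeCard_le hp hp'
  have h0 : 0 ≤ L * (Real.log n / n) := mul_nonneg hL
    (div_nonneg (Real.log_natCast_nonneg n) (Nat.cast_nonneg n))
  have e : ∀ c : ℕ, penC L n c = L * (Real.log n / n) * c := fun c => by unfold penC; ring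
  simp_rw [e]
  rw [← Finset.mul_sum, ← mul_add]
  refine mul_le_mul_of_nonneg_left ?_ h0
  push_cast at h
  exact h

/-- Since the test statistic is antisymmetric, the two criteria add up to at least a multiple of
the distance between the two histograms. -/
lemma two_alpha_hellSq_le {ℓ : ℕ} {m m' : Finset (CubeIdx d)}
    (hm : IsPartOf d ℓ (rootC d) m) (hm' : IsPartOf d ℓ (rootC d) m')
    (n : ℕ) (X : ℕ → Ω → (Fin d → ℝ)) {L : ℝ} (hL : 0 ≤ L) (ω : Ω) (hα : 0 ≤ alphaC) :
    2 * alphaC * hellSq d n X ω (histEst d n X m ω) (histEst d n X m' ω)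
      ≤ gammaSel d n X L (ℓ : ℕ∞) ω m + gammaSel d n X L (ℓ : ℕ∞) ω m' := by
  have hp := IsPartOf.props hm root_valid
  have hp' := IsPartOf.props hm' root_valid
  have h1 := sum_cellCrit_le n X L ℓ ω m hm'
  have h2 := sum_cellCrit_le n X L ℓ ω m' hm
  have h3 := sum_penC_le hp hp' hL n
  have h4 := sum_penC_le hp' hp hL n
  have h5 := mul_le_mul_of_nonneg_left (hellSq_le_sum hp hp' n X ω)
    (mul_nonneg zero_le_two hα)
  simp only [cellCrit, Finset.sum_sub_distrib] at h1 h2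
  have h6 : ∑ K ∈ m, ∑ K' ∈ m',
        cellTest d n X ω (histEst d n X m ω) (histEst d n X m' ω) K K'
      + ∑ K' ∈ m', ∑ K ∈ m, cellTest d n X ω (histEst d n X m' ω) (histEst d n X m ω) K' K
      = 2 * alphaC * ∑ K ∈ m, ∑ K' ∈ m',
        hellSq d n X ω (restr2 d (histEst d n X m ω) K K')
          (restr2 d (histEst d n X m' ω) K K') := by
    rw [Finset.sum_comm (s := m') (t := m), ← Finset.sum_add_distrib, Finset.mul_sum]
    refine Finset.sum_congr rfl fun K _ => ?_
    rw [← Finset.sum_add_distrib, Finset.mul_sum]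
    exact Finset.sum_congr rfl fun K' _ => cellTest_add_swap n X ω _ _ K K'
  linarith

lemma alphaC_ge : (0.146 : ℝ) ≤ alphaC := by
  have h : (0 : ℝ) < Real.sqrt 2 := by positivity
  have h2 : (1.4125 : ℝ) ≤ Real.sqrt 2 := Real.le_sqrt_of_sq_le (by norm_num)
  unfold alphaC
  have : 1 / Real.sqrt 2 ≤ 0.708 := by
    rw [div_le_iff₀ h]; linarith
  linarith

/-- On the good event the criterion is bounded by the risk of the histogram. -/
lemma gammaSel_le {s : (Fin d → ℝ) → (Fin d → ℝ) → ℝ}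
    (hsm : Measurable (Function.uncurry s)) (hs0 : ∀ x y, 0 ≤ s x y)
    (hs1 : ∀ x, ∫ y, s x y = 1) {n ℓ : ℕ} (hn : 0 < n) (hℓ : ℓ ≤ n)
    (X : ℕ → Ω → (Fin d → ℝ)) {ω : Ω} {ξ : ℝ} (hξ : 0 ≤ ξ)
    (hω : Zsum s n ℓ X ω < Real.exp (n * ξ)) {L : ℝ} (hL : 90 ≤ L)
    {m : Finset (CubeIdx d)} (hm : IsPartOf d ℓ (rootC d) m) :
    gammaSel d n X L (ℓ : ℕ∞) ω m
      ≤ 4 * hellSq d n X ω (sIndA d s) (histEst d n X m ω) + 8.5 * ξ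
        + 2 * penC L n m.card := by
  have hp := IsPartOf.props hm root_valid
  have hn' : (0 : ℝ) < n := by exact_mod_cast hn
  have hlog : 0 ≤ Real.log n := Real.log_natCast_nonneg n
  rw [gammaSel_eq]
  -- the family of partitions is finite, so the supremum is attained; the maximiser is replaced by
  -- the partition it induces in the cell
  have hloc : ∀ K : CubeIdx d, ∃ (g : Finset (CubeIdx d)) (u : CubeIdx d → ℝ), K ∈ m →
      IsPartOf d (ℓ + (rootC d).1 - K.1) K g ∧ (∀ c ∈ g, u c ∈ valSet d n) ∧
      (⨆ m' : MpartE d (ℓ : ℕ∞), cellCrit d n X L ω m m' K)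
        ≤ ∑ c ∈ g, constTest d n X ω c (val n X K ω) (u c) - penC L n g.card := by
    intro K
    by_cases hK : K ∈ m
    · obtain ⟨m', hm'⟩ := exists_eq_ciSup_of_finite
        (f := fun m' : MpartE d (ℓ : ℕ∞) => cellCrit d n X L ω m m' K)
      have hm'p : IsPartOf d ℓ (rootC d) m'.1 :=
        (Set.ext_iff.1 (MpartE_coe d ℓ) m'.1).1 m'.2
      obtain ⟨g, u, hg, hu, heq, hcard⟩ := localise hℓ hm hm'p X ω hK
      refine ⟨g, u, fun _ => ⟨hg, hu, ?_⟩⟩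
      rw [← hm', cellCrit, heq]
      have : penC L n g.card ≤ penC L n (veeCard d m' K) := by
        unfold penC
        have : (g.card : ℝ) ≤ veeCard d m' K := by exact_mod_cast hcard
        gcongr
      linarith
    · exact ⟨∅, fun _ => 0, fun h => absurd h hK⟩
  choose g u hgu using hloc
  have hgl : IsPartOf d ℓ (rootC d) (m.biUnion g) :=
    IsPartOf.glue hm g fun K hK => (hgu K hK).1
  have hpg := IsPartOf.props hgl root_valid
  have hgp : ∀ K ∈ m, PartProps (ℓ + (rootC d).1 - K.1) K (g K) := fun K hK =>
    IsPartOf.props (hgu K hK).1 (hp.valid K hK)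
  have huniq : ∀ K ∈ m, ∀ K₂ ∈ m, ∀ c, c ∈ g K → c ∈ g K₂ → K = K₂ := by
    intro K hK K₂ hK₂ c hc hc₂
    obtain ⟨z, hz⟩ := cube_nonempty ((hgp K hK).valid c hc)
    exact hp.disj K hK K₂ hK₂ z ((hgp K hK).sub c hc hz) ((hgp K₂ hK₂).sub c hc₂ hz)
  have hdisj : Set.PairwiseDisjoint (↑m) g := fun K hK K₂ hK₂ hne =>
    Finset.disjoint_left.2 fun c hc hc₂ => hne (huniq K hK K₂ hK₂ c hc hc₂)
  -- the pair of values attached to a cell of the glued partition, read off its parent in `m`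
  obtain ⟨v, hv⟩ : ∃ v : CubeIdx d → ℝ × ℝ, ∀ K ∈ m, ∀ c ∈ g K, v c = (val n X K ω, u K c) := by
    refine ⟨fun c => if h : ∃ K ∈ m, c ∈ g K then (val n X h.choose ω, u h.choose c) else 0,
      fun K hK c hc => ?_⟩
    have h : ∃ K ∈ m, c ∈ g K := ⟨K, hK, hc⟩
    have he : h.choose = K := huniq _ h.choose_spec.1 K hK c h.choose_spec.2 hc
    simp only [dif_pos h, he]
  have hlev : ∀ K ∈ m, K.1 ≤ n := fun K hK =>
    (hp.ge K hK).trans (by simpa [rootC] using hℓ)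
  have hvmem : ∀ c ∈ m.biUnion g, v c ∈ valSet d n ×ˢ valSet d n := by
    intro c hc
    obtain ⟨K, hK, hcK⟩ := Finset.mem_biUnion.1 hc
    rw [hv K hK c hcK]
    exact Finset.mk_mem_product (val_mem X (hlev K hK) ω) ((hgu K hK).2.1 c hcK)
  have hfl := fluct_bound hn hω hgl hvmem
  have hhs := sum_hs_le hsm hs0 hs1 n X ω hp hpg (fun c => (v c).1) (by
    intro c hc
    obtain ⟨K, hK, hcK⟩ := Finset.mem_biUnion.1 hc
    exact ⟨K, hK, (hgp K hK).sub c hcK, by rw [hv K hK c hcK]⟩)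
  have hsup : ∑ K ∈ m, (⨆ m' : MpartE d (ℓ : ℕ∞), cellCrit d n X L ω m m' K)
      ≤ ∑ c ∈ m.biUnion g, (4 * hs s n X c (v c).1 ω
          + 12 / (Real.sqrt 2 * n) * Wst s n X c (v c).1 (v c).2 ω)
        - penC L n (m.biUnion g).card := by
    have hpen : penC L n (m.biUnion g).card = ∑ K ∈ m, penC L n (g K).card := by
      unfold penC
      rw [Finset.card_biUnion hdisj]
      push_cast
      rw [Finset.mul_sum, Finset.sum_mul, Finset.sum_div]
    rw [hpen, Finset.sum_biUnion hdisj, ← Finset.sum_sub_distrib]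
    refine Finset.sum_le_sum fun K hK => (hgu K hK).2.2.trans ?_
    refine sub_le_sub_right (Finset.sum_le_sum fun c hc => ?_) _
    rw [hv K hK c hc]
    exact local_bound hsm hs0 hs1 hn X c (val_nonneg n X K ω)
      (valSet_nonneg ((hgu K hK).2.1 c hc)) ω
  rw [Finset.sum_add_distrib, ← Finset.mul_sum, ← Finset.mul_sum] at hsup
  set N : ℝ := ((m.biUnion g).card : ℝ) with hN
  have hN0 : 0 ≤ N := Nat.cast_nonneg _
  -- `12 / √2 ≤ 8.5` and `8 * 8.5 ≤ 90`, so that the penalty absorbs the logarithmic term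
  have hq : 12 / (Real.sqrt 2 * n) ≤ 8.5 / n := by
    have h2 : (1.4125 : ℝ) ≤ Real.sqrt 2 := Real.le_sqrt_of_sq_le (by norm_num)
    rw [div_le_div_iff₀ (by positivity) hn']
    nlinarith
  have hW : 12 / (Real.sqrt 2 * n) * ∑ c ∈ m.biUnion g, Wst s n X c (v c).1 (v c).2 ω
      ≤ 8.5 / n * (8 * Real.log n * N + n * ξ) :=
    (mul_le_mul_of_nonneg_left hfl (by positivity)).trans
      (mul_le_mul_of_nonneg_right hq (by positivity))
  have hW2 : 8.5 / n * (8 * Real.log n * N + n * ξ) = 68 * (N * Real.log n / n) + 8.5 * ξ := by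
    field_simp
    ring
  have hpen : 90 * (N * Real.log n / n) ≤ penC L n (m.biUnion g).card := by
    unfold penC
    rw [← hN, show L * N * Real.log n / n = L * (N * Real.log n / n) by ring]
    exact mul_le_mul_of_nonneg_right hL (by positivity)
  have h0 : 0 ≤ N * Real.log n / n := by positivity
  linarith

lemma one_div_le_penC {n : ℕ} (hn : 3 < n) {L : ℝ} (hL : 90 ≤ L) {m : Finset (CubeIdx d)}
    (hm : m.Nonempty) : 1 / (n : ℝ) ≤ penC L n m.card := by
  have hn' : (4 : ℝ) ≤ n := by exact_mod_cast hn
  have hlog : 1 ≤ Real.log n := by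
    rw [Real.le_log_iff_exp_le (by linarith)]
    linarith [Real.exp_one_lt_d9]
  have hc : (1 : ℝ) ≤ m.card := by exact_mod_cast hm.card_pos
  unfold penC
  have h1 : 1 ≤ L * m.card := by nlinarith
  have h2 : 1 ≤ L * m.card * Real.log n := by nlinarith
  gcongr

/-- The oracle inequality on the good event. -/
lemma oracle_of_good {s : (Fin d → ℝ) → (Fin d → ℝ) → ℝ}
    (hsm : Measurable (Function.uncurry s)) (hs0 : ∀ x y, 0 ≤ s x y)
    (hs1 : ∀ x, ∫ y, s x y = 1) {n ℓ : ℕ} (hn : 3 < n) (hℓ : ℓ ≤ n)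
    (X : ℕ → Ω → (Fin d → ℝ)) {ω : Ω} {ξ : ℝ} (hξ : 0 ≤ ξ)
    (hω : Zsum s n ℓ X ω < Real.exp (n * ξ)) {L : ℝ} (hL : 90 ≤ L)
    {m mh : Finset (CubeIdx d)} (hm : IsPartOf d ℓ (rootC d) m)
    (hmh : IsPartOf d ℓ (rootC d) mh)
    (hsel : gammaSel d n X L (ℓ : ℕ∞) ω mh ≤ gammaSel d n X L (ℓ : ℕ∞) ω m + 1 / n) :
    1 / 200 * hellSq d n X ω (sIndA d s) (histEst d n X mh ω)
      ≤ hellSq d n X ω (sIndA d s) (histEst d n X m ω) + penC L n m.card + 0.7 * ξ := by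
  have hα := alphaC_ge
  have hne : m.Nonempty := by
    obtain ⟨z, hz⟩ := cube_nonempty (root_valid (d := d))
    obtain ⟨c, hc, -⟩ := (IsPartOf.props hm root_valid).cover z hz
    exact ⟨c, hc⟩
  have h1 := gammaSel_le hsm hs0 hs1 (by omega) hℓ X hξ hω hL hm
  have h2 := two_alpha_hellSq_le hm hmh n X (by linarith : 0 ≤ L) ω (by linarith)
  have h3 := hellSq_triangle hsm hs0 hs1 n X ω m mh
  have h4 := one_div_le_penC hn hL hne
  have h5 := hellSq_nonneg n X ω (sIndA d s) (histEst d n X m ω)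
  have h6 := hellSq_nonneg n X ω (histEst d n X m ω) (histEst d n X mh ω)
  have h7 := mul_le_mul_of_nonneg_right hα h6
  have h8 : 0 ≤ 1 / (n : ℝ) := by positivity
  linarith

end DyadicSel
end

noncomputable section
open Classical

/-- **Theorem 3 of the paper.** There is a universal constant `C > 0` such
that for all `L ≥ 90` and `1 ≤ ℓ ≤ n`, the selected estimator `ŝ = ŝ(L,ℓ)` satisfies, for
all `ξ > 0`,
`P[ C H²(s 1_A, ŝ) ≥ inf_{m ∈ 𝓜_ℓ} (H²(s 1_A, ŝ_m) + pen(m)) + ξ ] ≤ 3 e^{-nξ}`. -/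
theorem stmt_5 :
    ∃ C : ℝ, 0 < C ∧
      ∀ (d : ℕ), 0 < d →
      ∀ (Ω : Type) (_ : MeasurableSpace Ω) (P : Measure Ω), IsProbabilityMeasure P →
      ∀ (n : ℕ), 3 < n →
      ∀ (X : ℕ → Ω → (Fin d → ℝ)), (∀ i, Measurable (X i)) →
      ∀ (s : (Fin d → ℝ) → (Fin d → ℝ) → ℝ),
        Measurable (Function.uncurry s) → (∀ x y, 0 ≤ s x y) →
        (∀ x, ∫ y, s x y = 1) →
        (∀ i, i < n → ∀ g : (Fin d → ℝ) → ℝ, Measurable g → (∃ c, ∀ x, |g x| ≤ c) →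
          P[(fun ω => g (X (i + 1) ω)) |
              ⨆ k ∈ Finset.range (i + 1), MeasurableSpace.comap (X k) inferInstance]
            =ᵐ[P] fun ω => ∫ y, g y * s (X i ω) y) →
      ∀ (L : ℝ), 90 ≤ L →
      ∀ (ℓ : ℕ), 1 ≤ ℓ → ℓ ≤ n →
      ∀ (mhat : Ω → Finset (CubeIdx d)),
        (∀ ω, mhat ω ∈ Mpart d ℓ) →
        (∀ ω, gammaSel d n X L (ℓ : ℕ∞) ω (mhat ω)
            ≤ (⨅ m : Mpart d ℓ, gammaSel d n X L (ℓ : ℕ∞) ω (m : Finset (CubeIdx d)))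
              + 1 / n) →
      ∀ (ξ : ℝ), 0 < ξ →
      P {ω | sInf {x : ℝ | ∃ m ∈ Mpart d ℓ,
                x = hellSq d n X ω (sIndA d s) (histEst d n X m ω) + penC L n m.card} + ξ
              ≤ C * hellSq d n X ω (sIndA d s) (histEst d n X (mhat ω) ω)}
        ≤ ENNReal.ofReal (3 * Real.exp (-(n * ξ))) := by
  refine ⟨1 / 200, by norm_num, ?_⟩
  intro d hd Ω _ P _ n hn X hX s hsm hs0 hs1 hM L hL ℓ _ hℓ mhat hmhat hsel ξ hξ
  refine le_trans (measure_mono ?_) ((DyadicSel.deviation hd hn hX hsm hs0 hs1 hM ℓ (n * ξ)).trans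
    (ENNReal.ofReal_le_ofReal (by linarith [Real.exp_pos (-(n * ξ))])))
  intro ω hbad
  by_contra hgood
  rw [Set.mem_ofPred_eq] at hbad
  rw [Set.mem_ofPred_eq, not_le] at hgood
  have hinf : 1 / 200 * hellSq d n X ω (sIndA d s) (histEst d n X (mhat ω) ω) - 0.7 * ξ
      ≤ sInf {x : ℝ | ∃ m ∈ Mpart d ℓ,
        x = hellSq d n X ω (sIndA d s) (histEst d n X m ω) + penC L n m.card} := by
    refine le_csInf ⟨_, _, IsPartOf.leaf ℓ (rootC d), rfl⟩ ?_
    rintro x ⟨m, hm, rfl⟩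
    have hsel' : gammaSel d n X L (ℓ : ℕ∞) ω (mhat ω)
        ≤ gammaSel d n X L (ℓ : ℕ∞) ω m + 1 / n := by
      have hinf := ciInf_le
        (f := fun m : Mpart d ℓ => gammaSel d n X L (ℓ : ℕ∞) ω (m : Finset (CubeIdx d)))
        (Set.finite_range _).bddBelow ⟨m, hm⟩
      linarith [hsel ω]
    have := DyadicSel.oracle_of_good hsm hs0 hs1 hn hℓ X hξ.le hgood hL hm (hmhat ω) hsel'
    linarith
  linarith

end
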